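/- arXiv:1506.06922 — 6 statements merged into one kernel-verified Lean document; each statement's English description precedes it below -/
import Mathlib

section
/- A continuous function f : (0,∞) → (0,∞) is operator monotone decreasing if and only if f is decreasing on (0,∞) and f(A ! B) ≥ f(A) ! f(B) for every n ∈ ℕ and all n×n positive definite complex matrices A, B. -/
open Matrix
open scoped ComplexOrder

/-- The Loewner order on matrices: `A ≤ B` iff `B - A` is positive semidefinite. -/
def MLE {n : ℕ} (A B : Matrix (Fin n) (Fin n) ℂ) : Prop := (B - A).PosSemidef

/-- The `t`-weighted harmonic mean `A !_t B = ((1-t)A⁻¹ + tB⁻¹)⁻¹`. -/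
noncomputable def wharm {n : ℕ} (t : ℝ) (A B : Matrix (Fin n) (Fin n) ℂ) :
    Matrix (Fin n) (Fin n) ℂ := ((1 - t) • A⁻¹ + t • B⁻¹)⁻¹

/-- The `t`-weighted arithmetic mean `A ∇_t B = (1-t)A + tB`. -/
noncomputable def warith {n : ℕ} (t : ℝ) (A B : Matrix (Fin n) (Fin n) ℂ) :
    Matrix (Fin n) (Fin n) ℂ := (1 - t) • A + t • B

/-- Real powers of a matrix, via the continuous functional calculus. -/
noncomputable def mpow {n : ℕ} (A : Matrix (Fin n) (Fin n) ℂ) (r : ℝ) :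
    Matrix (Fin n) (Fin n) ℂ := cfc (fun x : ℝ => x ^ r) A

/-- The `t`-weighted geometric mean `A #_t B = A^{1/2} (A^{-1/2} B A^{-1/2})^t A^{1/2}`. -/
noncomputable def wgeom {n : ℕ} (t : ℝ) (A B : Matrix (Fin n) (Fin n) ℂ) :
    Matrix (Fin n) (Fin n) ℂ :=
  mpow A (1/2) * mpow (mpow A (-(1/2)) * B * mpow A (-(1/2))) t * mpow A (1/2)

/-- `f` is operator monotone (increasing): order preserving on positive definite
matrices of every size, via the continuous functional calculus. -/
def OperatorMonotone (f : ℝ → ℝ) : Prop :=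
  ∀ (n : ℕ) (A B : Matrix (Fin n) (Fin n) ℂ), A.PosDef → B.PosDef →
    MLE A B → MLE (cfc f A) (cfc f B)

/-- `f` is operator monotone decreasing: order reversing on positive definite
matrices of every size, via the continuous functional calculus. -/
def OperatorAntitone (f : ℝ → ℝ) : Prop :=
  ∀ (n : ℕ) (A B : Matrix (Fin n) (Fin n) ℂ), A.PosDef → B.PosDef →
    MLE A B → MLE (cfc f B) (cfc f A)

section helpers
open scoped MatrixOrder

section norms
open scoped Matrix.Norms.L2Operator

theorem aux_inv_anti {n : ℕ} {A B : Matrix (Fin n) (Fin n) ℂ} (hA : A.PosDef) (hAB : A ≤ B) :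
    B⁻¹ ≤ A⁻¹ := by
  rw [Matrix.nonsing_inv_eq_ringInverse, Matrix.nonsing_inv_eq_ringInverse]
  exact CStarAlgebra.ringInverse_le_ringInverse hAB (Matrix.isStrictlyPositive_iff_posDef.2 hA)

theorem aux_le_of_eps {n : ℕ} {K L : Matrix (Fin n) (Fin n) ℂ}
    (h : ∀ η : ℝ, 0 < η → K ≤ L + η • (1 : Matrix (Fin n) (Fin n) ℂ)) : K ≤ L := by
  have ht : Filter.Tendsto (fun η : ℝ => L + η • (1 : Matrix (Fin n) (Fin n) ℂ))
      (nhdsWithin 0 (Set.Ioi 0)) (nhds L) := by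
    have hc : Continuous (fun η : ℝ => L + η • (1 : Matrix (Fin n) (Fin n) ℂ)) := by fun_prop
    have := hc.tendsto 0
    simp only [zero_smul, add_zero] at this
    exact this.mono_left nhdsWithin_le_nhds
  refine ge_of_tendsto ht ?_
  filter_upwards [self_mem_nhdsWithin] with η hη using h η hη

end norms

theorem aux_cont {m : ℕ} (A : Matrix (Fin m) (Fin m) ℂ) (f : ℝ → ℝ) :
    ContinuousOn f (spectrum ℝ A) := (Matrix.finite_real_spectrum (A := A)).continuousOn f

theorem aux_sa {m : ℕ} {A : Matrix (Fin m) (Fin m) ℂ} (hA : A.PosDef) : IsSelfAdjoint A :=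
  hA.isHermitian.isSelfAdjoint

theorem aux_spec {m : ℕ} {A : Matrix (Fin m) (Fin m) ℂ} (hA : A.PosDef) :
    ∀ x ∈ spectrum ℝ A, 0 < x :=
  (StarOrderedRing.isStrictlyPositive_iff_spectrum_pos A (aux_sa hA)).1
    (Matrix.isStrictlyPositive_iff_posDef.2 hA)

theorem aux_pd {m : ℕ} {A : Matrix (Fin m) (Fin m) ℂ} (hA : IsSelfAdjoint A)
    (h : ∀ x ∈ spectrum ℝ A, 0 < x) : A.PosDef :=
  Matrix.isStrictlyPositive_iff_posDef.1
    ((StarOrderedRing.isStrictlyPositive_iff_spectrum_pos A hA).2 h)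

theorem aux_cfc_pd {m : ℕ} {A : Matrix (Fin m) (Fin m) ℂ} (hA : A.PosDef) (f : ℝ → ℝ)
    (h : ∀ x, 0 < x → 0 < f x) : (cfc f A).PosDef := by
  refine aux_pd (cfc_predicate f A) ?_
  rw [cfc_map_spectrum f A (aux_sa hA) (aux_cont A f)]
  rintro _ ⟨x, hx, rfl⟩
  exact h x (aux_spec hA x hx)

theorem aux_inv_eq {m : ℕ} {A : Matrix (Fin m) (Fin m) ℂ} (hA : A.PosDef) (f : ℝ → ℝ)
    (h : ∀ x, 0 < x → 0 < f x) : (cfc f A)⁻¹ = cfc (fun x => (f x)⁻¹) A := by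
  refine Matrix.inv_eq_right_inv ?_
  rw [← cfc_mul f _ A (aux_cont A _) (aux_cont A _), ← cfc_one ℝ A (aux_sa hA)]
  refine cfc_congr fun x hx => ?_
  simpa using mul_inv_cancel₀ (h x (aux_spec hA x hx)).ne'

theorem aux_comp {m : ℕ} {A : Matrix (Fin m) (Fin m) ℂ} (hA : IsSelfAdjoint A) (f g : ℝ → ℝ) :
    cfc f (cfc g A) = cfc (fun x => f (g x)) A :=
  (cfc_comp f g A hA (((Matrix.finite_real_spectrum (A := A)).image g).continuousOn f)
    (aux_cont A g)).symm

theorem aux_inv_eq_id {m : ℕ} {A : Matrix (Fin m) (Fin m) ℂ} (hA : A.PosDef) :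
    A⁻¹ = cfc (fun x : ℝ => x⁻¹) A := by
  have := aux_inv_eq hA (fun x => x) (fun _ h => h)
  rwa [cfc_id' ℝ A (aux_sa hA)] at this

theorem aux_cfc_inv {m : ℕ} {A : Matrix (Fin m) (Fin m) ℂ} (hA : A.PosDef) (f : ℝ → ℝ) :
    cfc f A⁻¹ = cfc (fun x => f x⁻¹) A := by
  rw [aux_inv_eq_id hA, aux_comp (aux_sa hA)]

theorem aux_smul {m : ℕ} {A : Matrix (Fin m) (Fin m) ℂ} (hA : IsSelfAdjoint A) (f : ℝ → ℝ)
    (r : ℝ) : cfc f (r • A) = cfc (fun x => f (r * x)) A := by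
  have : r • A = cfc (fun x : ℝ => r * x) A := by
    rw [cfc_const_mul r _ A (aux_cont A _), cfc_id' ℝ A hA]
  rw [this, aux_comp hA]

theorem aux_add {m : ℕ} {A : Matrix (Fin m) (Fin m) ℂ} (hA : IsSelfAdjoint A) (f : ℝ → ℝ)
    (r : ℝ) : cfc f (A + r • 1) = cfc (fun x => f (x + r)) A := by
  have : A + r • 1 = cfc (fun x : ℝ => x + r) A := by
    rw [cfc_add_const r _ A (aux_cont A _) hA, cfc_id' ℝ A hA, Algebra.algebraMap_eq_smul_one]
  rw [this, aux_comp hA]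

theorem aux_mono {m : ℕ} (A : Matrix (Fin m) (Fin m) ℂ) {f g : ℝ → ℝ}
    (h : ∀ x ∈ spectrum ℝ A, f x ≤ g x) : cfc f A ≤ cfc g A :=
  cfc_mono h (aux_cont A f) (aux_cont A g)

theorem aux_lim {n : ℕ} {g : ℝ → ℝ} (hg : ContinuousOn g (Set.Ioi 0))
    {K M : Matrix (Fin n) (Fin n) ℂ} (hM : M.PosDef)
    (h : ∀ ε : ℝ, 0 < ε → K ≤ cfc g (M + ε • 1)) : K ≤ cfc g M := by
  refine aux_le_of_eps fun η hη => ?_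
  have h1 : ∀ x ∈ spectrum ℝ M, ∀ᶠ ε in nhdsWithin (0:ℝ) (Set.Ioi 0), g (x + ε) ≤ g x + η := by
    intro x hx
    have hx0 := aux_spec hM x hx
    have hc : ContinuousAt g x := hg.continuousAt (Ioi_mem_nhds hx0)
    have ht : Filter.Tendsto (fun ε : ℝ => x + ε) (nhdsWithin 0 (Set.Ioi 0)) (nhds x) := by
      have hc : Continuous (fun ε : ℝ => x + ε) := by fun_prop
      have := hc.tendsto 0
      simp only [add_zero] at this
      exact this.mono_left nhdsWithin_le_nhds
    exact (hc.tendsto.comp ht).eventually (Iic_mem_nhds (by linarith : g x < g x + η))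
  have h2 := (Filter.eventually_all_finite (Matrix.finite_real_spectrum (A := M))).2 h1
  obtain ⟨ε, hε, hε0⟩ := (h2.and self_mem_nhdsWithin).exists
  refine (h ε hε0).trans ?_
  rw [aux_add (aux_sa hM)]
  refine (aux_mono M hε).trans (le_of_eq ?_)
  rw [cfc_add_const η g M (aux_cont M g) (aux_sa hM), Algebra.algebraMap_eq_smul_one]

theorem aux_map {n m : ℕ}
    (φ : (Matrix (Fin n) (Fin n) ℂ × Matrix (Fin n) (Fin n) ℂ) →ₐ[ℝ] Matrix (Fin m) (Fin m) ℂ)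
    {X Y : Matrix (Fin n) (Fin n) ℂ} (hX : IsSelfAdjoint X) (hY : IsSelfAdjoint Y)
    (h : IsSelfAdjoint (φ (X, Y))) (f : ℝ → ℝ) :
    cfc f (φ (X, Y)) = φ (cfc f X, cfc f Y) := by
  classical
  have hfin : (spectrum ℝ X ∪ spectrum ℝ Y).Finite :=
    (Matrix.finite_real_spectrum (A := X)).union (Matrix.finite_real_spectrum (A := Y))
  let p : Polynomial ℝ := Lagrange.interpolate hfin.toFinset id f
  have hp : ∀ x ∈ spectrum ℝ X ∪ spectrum ℝ Y, f x = p.eval x := by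
    intro x hx
    exact (Lagrange.eval_interpolate_at_node (v := id) f (Function.injective_id.injOn)
      (hfin.mem_toFinset.2 hx)).symm
  have hsub : spectrum ℝ (φ (X, Y)) ⊆ spectrum ℝ X ∪ spectrum ℝ Y := by
    rw [← Prod.spectrum_eq]; exact AlgHom.spectrum_apply_subset φ _
  have e1 : cfc f (φ (X, Y)) = Polynomial.aeval (φ (X, Y)) p := by
    rw [← cfc_polynomial p _ h]; exact cfc_congr fun x hx => hp x (hsub hx)
  have e2 : cfc f X = Polynomial.aeval X p := by
    rw [← cfc_polynomial p _ hX]; exact cfc_congr fun x hx => hp x (Or.inl hx)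
  have e3 : cfc f Y = Polynomial.aeval Y p := by
    rw [← cfc_polynomial p _ hY]; exact cfc_congr fun x hx => hp x (Or.inr hx)
  rw [e1, e2, e3, Polynomial.aeval_algHom_apply]
  congr 1
  refine Prod.ext ?_ ?_
  · exact (Polynomial.aeval_algHom_apply (AlgHom.fst ℝ _ _) (X, Y) p).symm
  · exact (Polynomial.aeval_algHom_apply (AlgHom.snd ℝ _ _) (X, Y) p).symm

theorem aux_map_pd {n m : ℕ}
    (φ : (Matrix (Fin n) (Fin n) ℂ × Matrix (Fin n) (Fin n) ℂ) →ₐ[ℝ] Matrix (Fin m) (Fin m) ℂ)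
    {X Y : Matrix (Fin n) (Fin n) ℂ} (hX : X.PosDef) (hY : Y.PosDef)
    (h : IsSelfAdjoint (φ (X, Y))) : (φ (X, Y)).PosDef := by
  refine aux_pd h fun x hx => ?_
  have := AlgHom.spectrum_apply_subset φ _ hx
  rw [Prod.spectrum_eq] at this
  exact this.elim (aux_spec hX x) (aux_spec hY x)

/-- The block-diagonal embedding. -/
noncomputable def auxDiag (n : ℕ) : (Matrix (Fin n) (Fin n) ℂ × Matrix (Fin n) (Fin n) ℂ) →ₐ[ℝ]
    Matrix (Fin n ⊕ Fin n) (Fin n ⊕ Fin n) ℂ :=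
  AlgHom.ofLinearMap
    { toFun := fun Z => Matrix.fromBlocks Z.1 0 0 Z.2
      map_add' := fun Z W => by simp [Matrix.fromBlocks_add]
      map_smul' := fun r Z => by simp [Matrix.fromBlocks_smul] }
    (by simp) (fun Z W => by simp [Matrix.fromBlocks_multiply])

/-- The rotated block embedding. -/
noncomputable def auxRot (n : ℕ) : (Matrix (Fin n) (Fin n) ℂ × Matrix (Fin n) (Fin n) ℂ) →ₐ[ℝ]
    Matrix (Fin n ⊕ Fin n) (Fin n ⊕ Fin n) ℂ :=
  AlgHom.ofLinearMap
    { toFun := fun Z => Matrix.fromBlocks ((2⁻¹:ℝ) • Z.1 + (2⁻¹:ℝ) • Z.2)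
        ((2⁻¹:ℝ) • Z.2 - (2⁻¹:ℝ) • Z.1) ((2⁻¹:ℝ) • Z.2 - (2⁻¹:ℝ) • Z.1)
        ((2⁻¹:ℝ) • Z.1 + (2⁻¹:ℝ) • Z.2)
      map_add' := fun Z W => by
        rw [Matrix.fromBlocks_add]; congr 1 <;> simp only [Prod.fst_add, Prod.snd_add] <;> module
      map_smul' := fun r Z => by
        rw [Matrix.fromBlocks_smul]; congr 1 <;>
          simp only [Prod.smul_fst, Prod.smul_snd, RingHom.id_apply] <;> module }
    (by
      have : (2⁻¹:ℝ) • (1 : Matrix (Fin n) (Fin n) ℂ) + (2⁻¹:ℝ) • 1 = 1 := by module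
      simp only [LinearMap.coe_mk, AddHom.coe_mk, Prod.fst_one, Prod.snd_one, this, sub_self,
        Matrix.fromBlocks_one])
    (fun Z W => by
      simp only [LinearMap.coe_mk, AddHom.coe_mk, Prod.fst_mul, Prod.snd_mul,
        Matrix.fromBlocks_multiply, Matrix.mul_add, Matrix.add_mul, Matrix.mul_sub, Matrix.sub_mul,
        Matrix.smul_mul, Matrix.mul_smul]
      congr 1 <;> module)

theorem aux_half_pd {n : ℕ} {X Y : Matrix (Fin n) (Fin n) ℂ} (hX : X.PosDef) (hY : Y.PosDef) :
    ((2⁻¹:ℝ) • X + (2⁻¹:ℝ) • Y).PosDef :=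
  (hX.smul (by norm_num : (0:ℝ) < 2⁻¹)).add (hY.smul (by norm_num : (0:ℝ) < 2⁻¹))

theorem aux_concave {g : ℝ → ℝ} (hg : ContinuousOn g (Set.Ioi 0)) (hm : OperatorMonotone g)
    {n : ℕ} {X Y : Matrix (Fin n) (Fin n) ℂ} (hX : X.PosDef) (hY : Y.PosDef) :
    (2⁻¹:ℝ) • cfc g X + (2⁻¹:ℝ) • cfc g Y ≤ cfc g ((2⁻¹:ℝ) • X + (2⁻¹:ℝ) • Y) := by
  have hP := aux_half_pd hX hY
  refine aux_lim hg hP fun ε hε => ?_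
  set P := (2⁻¹:ℝ) • X + (2⁻¹:ℝ) • Y with hPdef
  set Q := (2⁻¹:ℝ) • Y - (2⁻¹:ℝ) • X with hQdef
  have hQ : Qᴴ = Q := by
    simp [hQdef, Matrix.conjTranspose_sub, Matrix.conjTranspose_smul, hX.isHermitian.eq,
      hY.isHermitian.eq]
  have hPε : (P + ε • 1).PosDef := hP.add (Matrix.PosDef.one.smul hε)
  have hC : (P + ε⁻¹ • (Q * Q)).PosDef := by
    refine hP.add_posSemidef (Matrix.PosSemidef.smul ?_ (inv_pos.2 hε).le)
    have := Matrix.posSemidef_conjTranspose_mul_self Q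
    rwa [hQ] at this
  let e := (Matrix.reindexAlgEquiv ℝ ℂ (finSumFinEquiv (m := n) (n := n))).toAlgHom
  have he : ∀ M, e M = M.submatrix finSumFinEquiv.symm finSumFinEquiv.symm := fun M => rfl
  have s1 : IsSelfAdjoint ((e.comp (auxRot n)) (X, Y)) := by
    change Matrix.IsHermitian (Matrix.submatrix (Matrix.fromBlocks P Q Q P) _ _)
    refine Matrix.IsHermitian.submatrix ?_ _
    exact Matrix.IsHermitian.fromBlocks hP.isHermitian hQ hP.isHermitian
  have s2 : IsSelfAdjoint ((e.comp (auxDiag n)) (P + ε • 1, P + ε⁻¹ • (Q * Q))) := by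
    change Matrix.IsHermitian
      (Matrix.submatrix (Matrix.fromBlocks (P + ε • 1) 0 0 (P + ε⁻¹ • (Q * Q))) _ _)
    refine Matrix.IsHermitian.submatrix ?_ _
    exact Matrix.IsHermitian.fromBlocks hPε.isHermitian (by simp) hC.isHermitian
  have key := hm (n + n) _ _ (aux_map_pd _ hX hY s1) (aux_map_pd _ hPε hC s2) (by
    change Matrix.PosSemidef (Matrix.submatrix (Matrix.fromBlocks (P + ε • 1) 0 0
      (P + ε⁻¹ • (Q * Q)) - Matrix.fromBlocks P Q Q P) _ _)
    refine Matrix.PosSemidef.submatrix ?_ _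
    have : Matrix.fromBlocks (P + ε • 1) 0 0 (P + ε⁻¹ • (Q * Q)) - Matrix.fromBlocks P Q Q P
        = ε⁻¹ • ((Matrix.fromBlocks (ε • 1) (-Q) 0 0 : Matrix (Fin n ⊕ Fin n) (Fin n ⊕ Fin n) ℂ)ᴴ
            * Matrix.fromBlocks (ε • 1) (-Q) 0 0) := by
      rw [Matrix.fromBlocks_conjTranspose, Matrix.fromBlocks_multiply, Matrix.fromBlocks_smul,
        sub_eq_add_neg, Matrix.fromBlocks_neg, Matrix.fromBlocks_add]
      simp [hQ, smul_smul, hε.ne']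
    rw [this]
    exact (Matrix.posSemidef_conjTranspose_mul_self _).smul (inv_pos.2 hε).le)
  rw [aux_map _ (aux_sa hX) (aux_sa hY) s1, aux_map _ (aux_sa hPε) (aux_sa hC) s2] at key
  have key2 := Matrix.PosSemidef.submatrix key (fun i : Fin n => finSumFinEquiv (Sum.inl i))
  have e9 : cfc g (P + ε • 1) - ((2⁻¹:ℝ) • cfc g X + (2⁻¹:ℝ) • cfc g Y) =
      ((e.comp (auxDiag n)) (cfc g (P + ε • 1), cfc g (P + ε⁻¹ • (Q * Q))) -
          (e.comp (auxRot n)) (cfc g X, cfc g Y)).submatrix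
      (fun i => finSumFinEquiv (Sum.inl i)) (fun i => finSumFinEquiv (Sum.inl i)) := by
    ext i j
    simp [he, auxRot, auxDiag]
  rw [← e9] at key2
  exact key2

theorem aux_antitone {h : ℝ → ℝ} (hh : ContinuousOn h (Set.Ioi 0)) (hpos : ∀ x, 0 < x → 0 < h x)
    (ha : AntitoneOn h (Set.Ioi 0))
    (hm : ∀ (n : ℕ) (X Y : Matrix (Fin n) (Fin n) ℂ), X.PosDef → Y.PosDef →
      cfc h ((2⁻¹:ℝ) • X + (2⁻¹:ℝ) • Y) ≤ (2⁻¹:ℝ) • cfc h X + (2⁻¹:ℝ) • cfc h Y) :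
    OperatorAntitone h := by
  have hpw : ∀ k : ℕ, 0 < (2⁻¹:ℝ)^k ∧ (2⁻¹:ℝ)^k ≤ 1 := fun k =>
    ⟨by positivity, pow_le_one₀ (by norm_num) (by norm_num)⟩
  -- dyadic Jensen
  have jen : ∀ (n : ℕ) (X Z : Matrix (Fin n) (Fin n) ℂ), X.PosDef → Z.PosDef → ∀ k : ℕ,
      ((1 - (2⁻¹:ℝ)^k) • X + (2⁻¹:ℝ)^k • Z).PosDef ∧
      cfc h ((1 - (2⁻¹:ℝ)^k) • X + (2⁻¹:ℝ)^k • Z) ≤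
        (1 - (2⁻¹:ℝ)^k) • cfc h X + (2⁻¹:ℝ)^k • cfc h Z := by
    intro n X Z hX hZ k
    induction k with
    | zero => simpa using hZ
    | succ k ih =>
      have e : ∀ U V : Matrix (Fin n) (Fin n) ℂ, (1 - (2⁻¹:ℝ)^(k+1)) • U + (2⁻¹:ℝ)^(k+1) • V =
          (2⁻¹:ℝ) • U + (2⁻¹:ℝ) • ((1 - (2⁻¹:ℝ)^k) • U + (2⁻¹:ℝ)^k • V) := by
        intro U V; rw [pow_succ]; module
      rw [e, e]
      refine ⟨aux_half_pd hX ih.1, (hm n _ _ hX ih.1).trans ?_⟩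
      have : (0 : Matrix (Fin n) (Fin n) ℂ) ≤ (2⁻¹:ℝ) • (((1 - (2⁻¹:ℝ)^k) • cfc h X +
          (2⁻¹:ℝ)^k • cfc h Z) - cfc h ((1 - (2⁻¹:ℝ)^k) • X + (2⁻¹:ℝ)^k • Z)) := by
        rw [Matrix.nonneg_iff_posSemidef]
        exact Matrix.PosSemidef.smul ih.2 (by norm_num)
      rw [← sub_nonneg]
      convert this using 1
      module
  -- strict case
  have strict : ∀ (n : ℕ) (A D : Matrix (Fin n) (Fin n) ℂ), A.PosDef → D.PosDef →
      cfc h (A + D) ≤ cfc h A := by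
    intro n A D hA hD
    have hB := hA.add hD
    obtain ⟨c, hc⟩ := ((Matrix.finite_real_spectrum (A := D)).image h).bddAbove
    have hc' : ∀ x ∈ spectrum ℝ D, h x ≤ max c 1 := fun x hx =>
      (hc ⟨x, hx, rfl⟩).trans (le_max_left _ _)
    have hc0 : 0 < max c 1 := lt_max_of_lt_right one_pos
    refine aux_le_of_eps fun η hη => ?_
    obtain ⟨k, hk⟩ := exists_pow_lt_of_lt_one (div_pos hη hc0) (by norm_num : (2⁻¹:ℝ) < 1)
    -- use exponent k + 1
    set r := (2⁻¹:ℝ)^(k+1) with hr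
    have hr0 : 0 < r := (hpw _).1
    have hr2 : r ≤ 2⁻¹ := by
      rw [hr, pow_succ]; have := (hpw k).2; linarith
    have hrη : r * max c 1 ≤ η := by
      have : r ≤ (2⁻¹:ℝ)^k := by rw [hr, pow_succ]; have := (hpw k).1; linarith
      have h3 := (lt_div_iff₀ hc0).1 hk
      have := mul_le_mul_of_nonneg_right this hc0.le
      linarith
    set s := (1 - r) / r with hs
    have hs1 : 1 ≤ s := by rw [hs, le_div_iff₀ hr0]; linarith
    have hsr : r * s = 1 - r := by rw [hs]; field_simp
    have hZ : (s • D).PosDef := hD.smul (by linarith)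
    have j := (jen n A (s • D) hA hZ (k+1)).2
    rw [← hr] at j
    have e1 : (1 - r) • A + r • s • D = (1 - r) • (A + D) := by
      rw [smul_smul, hsr, smul_add]
    rw [e1, aux_smul (aux_sa hB), aux_smul (aux_sa hD)] at j
    have i1 : cfc h (A + D) ≤ cfc (fun x => h ((1 - r) * x)) (A + D) := by
      refine aux_mono _ fun x hx => ?_
      have hx0 := aux_spec hB x hx
      refine ha (Set.mem_Ioi.2 (mul_pos (by linarith) hx0)) (Set.mem_Ioi.2 hx0) ?_
      nlinarith
    have i2 : cfc (fun x => h (s * x)) D ≤ algebraMap ℝ _ (max c 1) := by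
      refine cfc_le_algebraMap _ _ D (fun x hx => ?_) (aux_cont D _) (aux_sa hD)
      have hx0 := aux_spec hD x hx
      refine le_trans (ha (Set.mem_Ioi.2 hx0) (Set.mem_Ioi.2 (mul_pos (by linarith) hx0)) ?_)
        (hc' x hx)
      nlinarith
    have i2' : (0 : Matrix (Fin n) (Fin n) ℂ) ≤
        r • (algebraMap ℝ _ (max c 1) - cfc (fun x => h (s * x)) D) := by
      rw [Matrix.nonneg_iff_posSemidef]
      exact Matrix.PosSemidef.smul i2 hr0.le
    have i3 : (0 : Matrix (Fin n) (Fin n) ℂ) ≤ r • cfc h A := by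
      rw [Matrix.nonneg_iff_posSemidef]
      exact Matrix.PosSemidef.smul (aux_cfc_pd hA h hpos).posSemidef hr0.le
    have i4 : (0 : Matrix (Fin n) (Fin n) ℂ) ≤ (η - r * max c 1) • 1 := by
      rw [Matrix.nonneg_iff_posSemidef]
      exact Matrix.PosSemidef.smul Matrix.PosSemidef.one (by linarith)
    refine (i1.trans j).trans ?_
    rw [← sub_nonneg]
    convert add_nonneg (add_nonneg i2' i3) i4 using 1
    rw [Algebra.algebraMap_eq_smul_one]
    module
  intro n A B hA hB hAB
  change cfc h B ≤ cfc h A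
  have hneg : ∀ M : Matrix (Fin n) (Fin n) ℂ, cfc (fun x => - h x) M = - cfc h M :=
    fun M => cfc_neg h M
  have := aux_lim (g := fun x => - h x) (K := - cfc h A) hh.neg hB (fun ε hε => by
    rw [hneg]
    have := strict n A ((B - A) + ε • 1) hA
      (Matrix.PosDef.posSemidef_add hAB (Matrix.PosDef.one.smul hε))
    rw [← add_assoc, add_sub_cancel] at this
    exact neg_le_neg this)
  rw [hneg] at this
  exact neg_le_neg_iff.1 this

theorem aux_wharm {n : ℕ} (A B : Matrix (Fin n) (Fin n) ℂ) :
    wharm 2⁻¹ A B = ((2⁻¹:ℝ) • A⁻¹ + (2⁻¹:ℝ) • B⁻¹)⁻¹ := by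
  unfold wharm
  norm_num

theorem aux_neg_inv_mono : OperatorMonotone (fun x => - x⁻¹) := by
  intro n A B hA hB hAB
  change cfc _ A ≤ cfc _ B
  rw [cfc_neg, cfc_neg, ← aux_inv_eq_id hA, ← aux_inv_eq_id hB]
  exact neg_le_neg (aux_inv_anti hA hAB)

theorem aux_amhm {n : ℕ} {P Q : Matrix (Fin n) (Fin n) ℂ} (hP : P.PosDef) (hQ : Q.PosDef) :
    wharm 2⁻¹ P Q ≤ (2⁻¹:ℝ) • P + (2⁻¹:ℝ) • Q := by
  have hc : ContinuousOn (fun x : ℝ => - x⁻¹) (Set.Ioi 0) :=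
    (continuousOn_inv₀.mono (fun x hx => ne_of_gt hx)).neg
  have := aux_concave hc aux_neg_inv_mono hP.inv hQ.inv
  rw [cfc_neg, cfc_neg, cfc_neg, ← aux_inv_eq_id hP.inv, ← aux_inv_eq_id hQ.inv,
    ← aux_inv_eq_id (aux_half_pd hP.inv hQ.inv), ← aux_wharm,
    Matrix.nonsing_inv_nonsing_inv _ ((Matrix.isUnit_iff_isUnit_det _).1 hP.isUnit),
    Matrix.nonsing_inv_nonsing_inv _ ((Matrix.isUnit_iff_isUnit_det _).1 hQ.isUnit)] at this
  rw [← neg_le_neg_iff]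
  convert this using 1
  module

theorem aux_contInv {f : ℝ → ℝ} (hf : ContinuousOn f (Set.Ioi 0)) :
    ContinuousOn (fun x => f x⁻¹) (Set.Ioi 0) :=
  hf.comp (continuousOn_inv₀.mono (fun x hx => ne_of_gt hx)) (fun x hx => Set.mem_Ioi.2 (inv_pos.2 (Set.mem_Ioi.1 hx)))

theorem aux_forward_anti {f : ℝ → ℝ} (h : OperatorAntitone f) : AntitoneOn f (Set.Ioi 0) := by
  intro x hx y hy hxy
  have pd : ∀ z : ℝ, 0 < z → (algebraMap ℝ (Matrix (Fin 1) (Fin 1) ℂ) z).PosDef := by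
    intro z hz
    rw [Algebra.algebraMap_eq_smul_one]
    exact Matrix.PosDef.one.smul hz
  have := h 1 _ _ (pd x hx) (pd y hy) (by
    unfold MLE
    rw [← map_sub, Algebra.algebraMap_eq_smul_one]
    exact Matrix.PosSemidef.one.smul (sub_nonneg.2 hxy))
  unfold MLE at this
  rw [cfc_algebraMap, cfc_algebraMap, ← map_sub] at this
  have h2 := this.diag_nonneg (i := 0)
  rw [Algebra.algebraMap_eq_smul_one] at h2
  simpa using h2

theorem aux_main (f : ℝ → ℝ) (hf : ContinuousOn f (Set.Ioi 0))
    (hpos : ∀ x, 0 < x → 0 < f x) :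
    OperatorAntitone f ↔
      (AntitoneOn f (Set.Ioi 0) ∧
        ∀ (n : ℕ) (A B : Matrix (Fin n) (Fin n) ℂ), A.PosDef → B.PosDef →
          MLE (wharm 2⁻¹ (cfc f A) (cfc f B)) (cfc f (wharm 2⁻¹ A B))) := by
  have inv2 : ∀ {n : ℕ} {P : Matrix (Fin n) (Fin n) ℂ}, P.PosDef → P⁻¹⁻¹ = P := fun hP =>
    Matrix.nonsing_inv_nonsing_inv _ ((Matrix.isUnit_iff_isUnit_det _).1 hP.isUnit)
  constructor
  · intro h
    refine ⟨aux_forward_anti h, fun n A B hA hB => ?_⟩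
    change wharm 2⁻¹ (cfc f A) (cfc f B) ≤ cfc f (wharm 2⁻¹ A B)
    have hmono : OperatorMonotone (fun x => f x⁻¹) := by
      intro m X Y hX hY hXY
      rw [← aux_cfc_inv hX, ← aux_cfc_inv hY]
      exact h m _ _ hY.inv hX.inv (aux_inv_anti hX hXY)
    refine (aux_amhm (aux_cfc_pd hA f hpos) (aux_cfc_pd hB f hpos)).trans ?_
    have := aux_concave (aux_contInv hf) hmono hA.inv hB.inv
    rwa [← aux_cfc_inv hA.inv, ← aux_cfc_inv hB.inv, ← aux_cfc_inv (aux_half_pd hA.inv hB.inv),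
      inv2 hA, inv2 hB, ← aux_wharm] at this
  · rintro ⟨hanti, hmid⟩
    have hpos1 : ∀ x : ℝ, 0 < x → 0 < f x⁻¹ := fun x hx => hpos _ (inv_pos.2 hx)
    have hinv : ∀ {n : ℕ} {X : Matrix (Fin n) (Fin n) ℂ}, X.PosDef →
        cfc (fun x => (f x⁻¹)⁻¹) X = (cfc f X⁻¹)⁻¹ := by
      intro n X hX
      rw [aux_cfc_inv hX, aux_inv_eq hX _ hpos1]
    have hA : OperatorAntitone (fun x => (f x⁻¹)⁻¹) := by
      refine aux_antitone ((aux_contInv hf).inv₀ fun x hx => (hpos1 x hx).ne')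
        (fun x hx => inv_pos.2 (hpos1 x hx)) ?_ ?_
      · intro x hx y hy hxy
        have hx' : (0:ℝ) < x := hx
        have hy' : (0:ℝ) < y := hy
        exact inv_anti₀ (hpos1 x hx) (hanti (inv_pos.2 hy') (inv_pos.2 hx') (inv_anti₀ hx' hxy))
      · intro n X Y hX hY
        rw [hinv hX, hinv hY, hinv (aux_half_pd hX hY)]
        have pX := aux_cfc_pd hX.inv f hpos
        have pY := aux_cfc_pd hY.inv f hpos
        have := hmid n X⁻¹ Y⁻¹ hX.inv hY.inv
        rw [aux_wharm, aux_wharm, inv2 hX, inv2 hY] at this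
        have pm := aux_half_pd pX.inv pY.inv
        have := aux_inv_anti pm.inv this
        rwa [inv2 pm] at this
    intro n A B hPA hPB hAB
    have h1 := hA n _ _ hPB.inv hPA.inv (aux_inv_anti hPA hAB)
    rw [hinv hPA.inv, hinv hPB.inv, inv2 hPA, inv2 hPB] at h1
    have pA := aux_cfc_pd hPA f hpos
    have pB := aux_cfc_pd hPB f hpos
    have h2 := aux_inv_anti pA.inv h1
    rw [inv2 pA, inv2 pB] at h2
    exact h2

end helpers

theorem stmt_11 (f : ℝ → ℝ) (hf : ContinuousOn f (Set.Ioi 0))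
    (hf' : ∀ x ∈ Set.Ioi (0:ℝ), f x ∈ Set.Ioi (0:ℝ)) :
    OperatorAntitone f ↔
      (AntitoneOn f (Set.Ioi 0) ∧
        ∀ (n : ℕ) (A B : Matrix (Fin n) (Fin n) ℂ), A.PosDef → B.PosDef →
          MLE (wharm 2⁻¹ (cfc f A) (cfc f B)) (cfc f (wharm 2⁻¹ A B))) :=
  aux_main f hf hf'
end

section
/- For every n ∈ ℕ, all n×n positive definite complex matrices A, B, and every t ∈ [0,1], one has log((A !_t B) + I) ≤ log(A + I) !_t log(B + I) in the Loewner order, where I is the identity matrix. -/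
open Matrix
open scoped ComplexOrder

section Core

open MeasureTheory Set

variable {𝔸 : Type*} [CStarAlgebra 𝔸] [PartialOrder 𝔸] [StarOrderedRing 𝔸]

lemma aux_scalar {x : ℝ} (hx : 0 < x) :
    ∫ s in Icc (0:ℝ) 1, (x + s)⁻¹ = Real.log (x⁻¹ + 1) := by
  rw [integral_Icc_eq_integral_Ioc, ← intervalIntegral.integral_of_le zero_le_one]
  rw [intervalIntegral.integral_comp_add_left (fun s => s⁻¹) x]
  rw [integral_inv_of_pos (by linarith) (by linarith)]
  congr 1
  field_simp
  ring

lemma aux_alg {K P Q₁ Q₂ C₁ C₂ W₁ W₂ : 𝔸} {a b : ℝ} (ha : 0 ≤ a) (hb : 0 ≤ b)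
    (hK : star K = K) (hP : star P = P) (hQ₁ : star Q₁ = Q₁) (hQ₂ : star Q₂ = Q₂)
    (hW₁ : star W₁ = W₁) (hW₂ : star W₂ = W₂)
    (hC₁ : 0 ≤ C₁) (hC₂ : 0 ≤ C₂)
    (h₁ : Q₁ * C₁ = 1) (h₁' : C₁ * Q₁ = 1) (h₂ : Q₂ * C₂ = 1) (h₂' : C₂ * Q₂ = 1)
    (h : P * (a • C₁ + b • C₂) = 1) :
    0 ≤ K * P * K - K * P * (a • W₁ + b • W₂) - (a • W₁ + b • W₂) * P * K
      + (a • (W₁ * Q₁ * W₁) + b • (W₂ * Q₂ * W₂)) := by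
  have key : ∀ C Q W : 𝔸, star Q = Q → star W = W → 0 ≤ C → Q * C = 1 → C * Q = 1 →
      0 ≤ K * (P * C) * P * K - K * P * W - W * P * K + W * Q * W := by
    intro C Q W hQ hW hC h h'
    have := star_left_conjugate_nonneg hC (P * K - Q * W)
    convert this using 1
    simp only [star_sub, star_mul, hQ, hW, hK, hP]
    have e1 : ∀ Z, Q * (C * Z) = Z := fun Z => by rw [← mul_assoc, h, one_mul]
    have e2 : ∀ Z, C * (Q * Z) = Z := fun Z => by rw [← mul_assoc, h', one_mul]
    simp only [sub_mul, mul_sub, mul_assoc, e1, e2]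
    abel
  have := add_nonneg (smul_nonneg ha (key C₁ Q₁ W₁ hQ₁ hW₁ hC₁ h₁ h₁'))
    (smul_nonneg hb (key C₂ Q₂ W₂ hQ₂ hW₂ hC₂ h₂ h₂'))
  convert this using 1
  have e : K * P * K = K * (P * (a • C₁ + b • C₂)) * P * K := by rw [h, mul_one]
  rw [e]
  simp only [mul_add, add_mul, smul_add, smul_sub, mul_smul_comm, smul_mul_assoc]
  abel

lemma aux_cont_s14 {Z : 𝔸} (hZ : IsStrictlyPositive Z) :
    ContinuousOn (Function.uncurry fun s x : ℝ => (x + s)⁻¹) (Icc (0:ℝ) 1 ×ˢ spectrum ℝ Z) := by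
  have hpos : ∀ x ∈ spectrum ℝ Z, 0 < x := fun x hx => hZ.spectrum_pos hx
  apply ContinuousOn.inv₀
  · fun_prop
  · rintro ⟨s, x⟩ ⟨hs, hx⟩
    have := hpos x hx
    have := hs.1
    simp only at *
    positivity

lemma aux_int {Z : 𝔸} (hZ : IsStrictlyPositive Z) :
    IntegrableOn (fun s : ℝ => cfc (fun x : ℝ => (x + s)⁻¹) Z) (Icc (0:ℝ) 1) volume ∧
    cfc (fun x : ℝ => Real.log (x⁻¹ + 1)) Z
      = ∫ s in Icc (0:ℝ) 1, cfc (fun x : ℝ => (x + s)⁻¹) Z := by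
  have hpos : ∀ x ∈ spectrum ℝ Z, 0 < x := fun x hx => hZ.spectrum_pos hx
  have hsa : IsSelfAdjoint Z := hZ.isSelfAdjoint
  have hc := aux_cont_s14 hZ
  obtain ⟨C, hC⟩ := (isCompact_Icc.prod
    (ContinuousFunctionalCalculus.isCompact_spectrum (R := ℝ) Z)).exists_bound_of_continuousOn hc
  have hb : ∀ᵐ s ∂(volume.restrict (Icc (0:ℝ) 1)), ∀ z ∈ spectrum ℝ Z, ‖(z + s)⁻¹‖ ≤ C := by
    refine ae_restrict_of_forall_mem measurableSet_Icc fun s hs z hz => ?_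
    exact hC (s, z) ⟨hs, hz⟩
  have hfin : HasFiniteIntegral (fun _ : ℝ => C) (volume.restrict (Icc (0:ℝ) 1)) :=
    (integrable_const C).hasFiniteIntegral
  refine ⟨integrableOn_cfc measurableSet_Icc (fun s x : ℝ => (x + s)⁻¹) (fun _ => C) Z hc hb hfin hsa, ?_⟩
  rw [← cfc_setIntegral measurableSet_Icc (fun s x : ℝ => (x + s)⁻¹) (fun _ => C) Z hc hb hfin hsa]
  exact cfc_congr fun x hx => (aux_scalar (hpos x hx)).symm

lemma aux_res {Z : 𝔸} (hZ : IsStrictlyPositive Z) {s : ℝ} (hs : 0 ≤ s) :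
    0 ≤ Z + algebraMap ℝ 𝔸 s ∧
    cfc (fun x : ℝ => (x + s)⁻¹) Z * (Z + algebraMap ℝ 𝔸 s) = 1 ∧
    (Z + algebraMap ℝ 𝔸 s) * cfc (fun x : ℝ => (x + s)⁻¹) Z = 1 := by
  have hpos : ∀ x ∈ spectrum ℝ Z, 0 < x := fun x hx => hZ.spectrum_pos hx
  have hsa : IsSelfAdjoint Z := hZ.isSelfAdjoint
  have hc : ContinuousOn (fun x : ℝ => (x + s)⁻¹) (spectrum ℝ Z) :=
    ContinuousOn.inv₀ (by fun_prop) fun x hx => by have := hpos x hx; positivity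
  have e : Z + algebraMap ℝ 𝔸 s = cfc (fun x : ℝ => x + s) Z := by
    rw [cfc_add_const s (fun x => x) Z, cfc_id' ℝ Z]
  rw [e]
  refine ⟨cfc_nonneg fun x hx => by have := hpos x hx; positivity, ?_, ?_⟩
  · rw [← cfc_mul _ _ Z, ← cfc_one ℝ Z]
    refine cfc_congr fun x hx => ?_
    have := hpos x hx
    simp only [Pi.one_apply]
    field_simp
  · rw [← cfc_mul _ _ Z, ← cfc_one ℝ Z]
    refine cfc_congr fun x hx => ?_
    have := hpos x hx
    simp only [Pi.one_apply]
    field_simp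

lemma aux_logpos {x : ℝ} (hx : 0 < x) : 0 < Real.log (x⁻¹ + 1) :=
  Real.log_pos (by have := inv_pos.2 hx; linarith)

lemma aux_logcont {Z : 𝔸} (hZ : IsStrictlyPositive Z) :
    ContinuousOn (fun x : ℝ => Real.log (x⁻¹ + 1)) (spectrum ℝ Z) := by
  have hpos : ∀ x ∈ spectrum ℝ Z, 0 < x := fun x hx => hZ.spectrum_pos hx
  refine ContinuousOn.log ?_ fun x hx => ?_
  · exact (continuousOn_id.inv₀ fun x hx => (hpos x hx).ne').add continuousOn_const
  · have := hpos x hx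
    positivity

lemma aux_K {Z : 𝔸} (hZ : IsStrictlyPositive Z) :
    IsStrictlyPositive (cfc (fun x : ℝ => Real.log (x⁻¹ + 1)) Z) ∧
    IsStrictlyPositive (cfc (fun x : ℝ => (Real.log (x⁻¹ + 1))⁻¹) Z) ∧
    cfc (fun x : ℝ => (Real.log (x⁻¹ + 1))⁻¹) Z * cfc (fun x : ℝ => Real.log (x⁻¹ + 1)) Z = 1 ∧
    cfc (fun x : ℝ => Real.log (x⁻¹ + 1)) Z * cfc (fun x : ℝ => (Real.log (x⁻¹ + 1))⁻¹) Z = 1 := by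
  have hpos : ∀ x ∈ spectrum ℝ Z, 0 < x := fun x hx => hZ.spectrum_pos hx
  have hsa : IsSelfAdjoint Z := hZ.isSelfAdjoint
  have hc := aux_logcont hZ
  have hc' : ContinuousOn (fun x : ℝ => (Real.log (x⁻¹ + 1))⁻¹) (spectrum ℝ Z) :=
    hc.inv₀ fun x hx => (aux_logpos (hpos x hx)).ne'
  refine ⟨?_, ?_, ?_, ?_⟩
  · rw [cfc_isStrictlyPositive_iff _ Z hc hsa]
    exact fun x hx => aux_logpos (hpos x hx)
  · rw [cfc_isStrictlyPositive_iff _ Z hc' hsa]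
    exact fun x hx => inv_pos.2 (aux_logpos (hpos x hx))
  · rw [← cfc_mul _ _ Z, ← cfc_one ℝ Z]
    exact cfc_congr fun x hx => inv_mul_cancel₀ (aux_logpos (hpos x hx)).ne'
  · rw [← cfc_mul _ _ Z, ← cfc_one ℝ Z]
    exact cfc_congr fun x hx => mul_inv_cancel₀ (aux_logpos (hpos x hx)).ne'

lemma aux_lin {f : ℝ → 𝔸} {μ : Measure ℝ} (hf : Integrable f μ) (U V : 𝔸) :
    Integrable (fun s => U * f s * V) μ ∧ ∫ s, U * f s * V ∂μ = U * (∫ s, f s ∂μ) * V :=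
  ⟨(ContinuousLinearMap.mulLeftRight ℝ 𝔸 U V).integrable_comp hf,
    (ContinuousLinearMap.mulLeftRight ℝ 𝔸 U V).integral_comp_comm hf⟩

lemma aux_sum {f₁ f₂ f₃ f₄ f₅ : ℝ → 𝔸} {μ : Measure ℝ} (h₁ : Integrable f₁ μ)
    (h₂ : Integrable f₂ μ) (h₃ : Integrable f₃ μ) (h₄ : Integrable f₄ μ) (h₅ : Integrable f₅ μ)
    (a b : ℝ) :
    ∫ s, (f₁ s - f₂ s - f₃ s + (a • f₄ s + b • f₅ s)) ∂μ =
      ∫ s, f₁ s ∂μ - ∫ s, f₂ s ∂μ - ∫ s, f₃ s ∂μ + (a • ∫ s, f₄ s ∂μ + b • ∫ s, f₅ s ∂μ) := by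
  have h12 : Integrable (fun s => f₁ s - f₂ s) μ := h₁.sub h₂
  have h123 : Integrable (fun s => f₁ s - f₂ s - f₃ s) μ := h12.sub h₃
  have h4 : Integrable (fun s => a • f₄ s) μ := h₄.smul a
  have h5 : Integrable (fun s => b • f₅ s) μ := h₅.smul b
  have h45 : Integrable (fun s => a • f₄ s + b • f₅ s) μ := h4.add h5
  rw [integral_add h123 h45, integral_sub h12 h₃, integral_sub h₁ h₂, integral_add h4 h5,
    integral_smul, integral_smul]

lemma aux_convex {X Y : 𝔸} (hX : IsStrictlyPositive X) (hY : IsStrictlyPositive Y)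
    {a b : ℝ} (ha : 0 ≤ a) (hb : 0 ≤ b) (hab : a + b = 1) : IsStrictlyPositive (a • X + b • Y) := by
  rcases ha.eq_or_lt with rfl | ha
  · have : b = 1 := by linarith
    simpa [this] using hY
  · exact (hX.smul ha).add_nonneg (smul_nonneg hb hY.nonneg)

lemma aux_core {X Y : 𝔸} (hX : IsStrictlyPositive X) (hY : IsStrictlyPositive Y)
    {a b : ℝ} (ha : 0 ≤ a) (hb : 0 ≤ b) (hab : a + b = 1) :
    a • cfc (fun x : ℝ => (Real.log (x⁻¹ + 1))⁻¹) X + b • cfc (fun x : ℝ => (Real.log (x⁻¹ + 1))⁻¹) Y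
      ≤ cfc (fun x : ℝ => (Real.log (x⁻¹ + 1))⁻¹) (a • X + b • Y) := by
  have hM := aux_convex hX hY ha hb hab
  set M := a • X + b • Y with hMdef
  set K := cfc (fun x : ℝ => (Real.log (x⁻¹ + 1))⁻¹) M with hK
  set W₁ := cfc (fun x : ℝ => (Real.log (x⁻¹ + 1))⁻¹) X with hW₁
  set W₂ := cfc (fun x : ℝ => (Real.log (x⁻¹ + 1))⁻¹) Y with hW₂
  obtain ⟨-, kp, k1, k2⟩ := aux_K hM
  obtain ⟨-, p1, k11, k12⟩ := aux_K hX
  obtain ⟨-, p2, k21, k22⟩ := aux_K hY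
  rw [← hK] at kp k1 k2
  rw [← hW₁] at p1 k11 k12
  rw [← hW₂] at p2 k21 k22
  obtain ⟨iM, eM⟩ := aux_int hM
  obtain ⟨iX, eX⟩ := aux_int hX
  obtain ⟨iY, eY⟩ := aux_int hY
  rw [eM] at k1 k2
  rw [eX] at k11 k12
  rw [eY] at k21 k22
  set D := a • W₁ + b • W₂ with hD
  have hpt : ∀ s ∈ Icc (0:ℝ) 1, 0 ≤ K * cfc (fun x : ℝ => (x + s)⁻¹) M * K
      - K * cfc (fun x : ℝ => (x + s)⁻¹) M * D - D * cfc (fun x : ℝ => (x + s)⁻¹) M * K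
      + (a • (W₁ * cfc (fun x : ℝ => (x + s)⁻¹) X * W₁)
        + b • (W₂ * cfc (fun x : ℝ => (x + s)⁻¹) Y * W₂)) := by
    intro s hs
    obtain ⟨c1, q1, q1'⟩ := aux_res hX hs.1
    obtain ⟨c2, q2, q2'⟩ := aux_res hY hs.1
    obtain ⟨-, q, -⟩ := aux_res hM hs.1
    refine aux_alg ha hb kp.isSelfAdjoint (cfc_predicate _ _ : IsSelfAdjoint _)
      (cfc_predicate _ _ : IsSelfAdjoint _) (cfc_predicate _ _ : IsSelfAdjoint _)
      p1.isSelfAdjoint p2.isSelfAdjoint c1 c2 q1 q1' q2 q2' ?_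
    convert q using 2
    rw [hMdef, smul_add, smul_add, add_add_add_comm, ← add_smul, hab, one_smul]
  have hI := integral_nonneg_of_ae (ae_restrict_of_forall_mem (μ := volume) measurableSet_Icc hpt)
  obtain ⟨i1, e1⟩ := aux_lin iM K K
  obtain ⟨i2, e2⟩ := aux_lin iM K D
  obtain ⟨i3, e3⟩ := aux_lin iM D K
  obtain ⟨i4, e4⟩ := aux_lin iX W₁ W₁
  obtain ⟨i5, e5⟩ := aux_lin iY W₂ W₂
  rw [aux_sum i1 i2 i3 i4 i5, e1, e2, e3, e4, e5,
    k1, k11, k21, mul_assoc D, k2, one_mul, one_mul, one_mul, one_mul, mul_one, ← hD] at hI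
  rw [← sub_nonneg]
  convert hI using 1
  abel

lemma aux_final {X Y : 𝔸} (hX : IsStrictlyPositive X) (hY : IsStrictlyPositive Y)
    {a b : ℝ} (ha : 0 ≤ a) (hb : 0 ≤ b) (hab : a + b = 1) :
    cfc (fun x : ℝ => Real.log (x⁻¹ + 1)) (a • X + b • Y) ≤
      Ring.inverse (a • Ring.inverse (cfc (fun x : ℝ => Real.log (x⁻¹ + 1)) X)
        + b • Ring.inverse (cfc (fun x : ℝ => Real.log (x⁻¹ + 1)) Y)) := by
  have inv : ∀ Z : 𝔸, IsStrictlyPositive Z → 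
      Ring.inverse (cfc (fun x : ℝ => Real.log (x⁻¹ + 1)) Z)
        = cfc (fun x : ℝ => (Real.log (x⁻¹ + 1))⁻¹) Z := fun Z hZ => by
    obtain ⟨-, -, h1, h2⟩ := aux_K hZ
    exact Ring.inverse_unit ⟨_, _, h2, h1⟩
  have inv' : ∀ Z : 𝔸, IsStrictlyPositive Z → 
      Ring.inverse (cfc (fun x : ℝ => (Real.log (x⁻¹ + 1))⁻¹) Z)
        = cfc (fun x : ℝ => Real.log (x⁻¹ + 1)) Z := fun Z hZ => by
    obtain ⟨-, -, h1, h2⟩ := aux_K hZ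
    exact Ring.inverse_unit ⟨_, _, h1, h2⟩
  rw [inv X hX, inv Y hY, ← inv' _ (aux_convex hX hY ha hb hab)]
  exact CStarAlgebra.ringInverse_le_ringInverse (aux_core hX hY ha hb hab)
    (aux_convex (aux_K hX).2.1 (aux_K hY).2.1 ha hb hab)

lemma aux_cfc {Z : 𝔸} (hZ : IsStrictlyPositive Z) :
    cfc Real.log (Ring.inverse Z + 1) = cfc (fun x : ℝ => Real.log (x⁻¹ + 1)) Z := by
  have hpos : ∀ x ∈ spectrum ℝ Z, 0 < x := fun x hx => hZ.spectrum_pos hx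
  have hsa : IsSelfAdjoint Z := hZ.isSelfAdjoint
  have hc : ContinuousOn (fun x : ℝ => x⁻¹) (spectrum ℝ Z) :=
    continuousOn_id.inv₀ fun x hx => (hpos x hx).ne'
  have hi : Ring.inverse Z = cfc (fun x : ℝ => x⁻¹) Z := by
    have h1 : Z * cfc (fun x : ℝ => x⁻¹) Z = 1 := by
      conv_lhs => rw [← cfc_id' ℝ Z, ← cfc_comp' (fun x : ℝ => x⁻¹) (fun x => x) Z (by simpa using hc)]
      rw [← cfc_mul _ _ Z, ← cfc_one ℝ Z]
      exact cfc_congr fun x hx => mul_inv_cancel₀ (hpos x hx).ne'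
    calc Ring.inverse Z = Ring.inverse Z * (Z * cfc (fun x : ℝ => x⁻¹) Z) := by rw [h1, mul_one]
      _ = _ := by rw [Ring.inverse_mul_cancel_left _ _ hZ.isUnit]
  have e : Ring.inverse Z + 1 = cfc (fun x : ℝ => x⁻¹ + 1) Z := by
    rw [cfc_add_const 1 (fun x : ℝ => x⁻¹) Z, hi, map_one]
  have hl : ContinuousOn Real.log ((fun x : ℝ => x⁻¹ + 1) '' spectrum ℝ Z) := by
    refine ContinuousOn.log continuousOn_id ?_
    rintro _ ⟨x, hx, rfl⟩
    have := hpos x hx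
    simp only [id]
    positivity
  rw [e, ← cfc_comp' Real.log (fun x : ℝ => x⁻¹ + 1) Z hl (hc.add continuousOn_const)]

end Core

section Final
open scoped MatrixOrder Matrix.Norms.L2Operator

lemma aux_mat {n : ℕ} {Z : Matrix (Fin n) (Fin n) ℂ} (hZ : Z.PosDef) :
    cfc Real.log (Z⁻¹ + 1) = cfc (fun x : ℝ => Real.log (x⁻¹ + 1)) Z := by
  rw [Matrix.nonsing_inv_eq_ringInverse]
  exact aux_cfc hZ.isStrictlyPositive

lemma aux_stmt (n : ℕ) (A B : Matrix (Fin n) (Fin n) ℂ)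
    (hA : A.PosDef) (hB : B.PosDef) (t : ℝ) (ht : t ∈ Set.Icc (0:ℝ) 1) :
    MLE (cfc Real.log (wharm t A B + 1))
      (wharm t (cfc Real.log (A + 1)) (cfc Real.log (B + 1))) := by
  have hX := hA.inv.isStrictlyPositive
  have hY := hB.inv.isStrictlyPositive
  have ha : 0 ≤ 1 - t := by linarith [ht.2]
  have hM := aux_convex hX hY ha ht.1 (by ring)
  have e1 := aux_mat hA.inv
  have e2 := aux_mat hB.inv
  have e3 := aux_mat hM.posDef
  rw [Matrix.nonsing_inv_nonsing_inv _ ((Matrix.isUnit_iff_isUnit_det _).1 hA.isUnit)] at e1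
  rw [Matrix.nonsing_inv_nonsing_inv _ ((Matrix.isUnit_iff_isUnit_det _).1 hB.isUnit)] at e2
  have := aux_final hX hY ha ht.1 (by ring)
  unfold MLE wharm
  rw [e1, e2, e3, ← Matrix.le_iff]
  simp only [Matrix.nonsing_inv_eq_ringInverse] at this ⊢
  exact this

end Final

theorem stmt_14 (n : ℕ) (A B : Matrix (Fin n) (Fin n) ℂ)
    (hA : A.PosDef) (hB : B.PosDef) (t : ℝ) (ht : t ∈ Set.Icc (0:ℝ) 1) :
    MLE (cfc Real.log (wharm t A B + 1))
      (wharm t (cfc Real.log (A + 1)) (cfc Real.log (B + 1))) := by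
  exact aux_stmt n A B hA hB t ht
end

section
/- For every n ∈ ℕ, all n×n positive definite complex matrices A, B, C, and all α, t ∈ [0,1], one has A #_α (B !_t C) ≤ (A #_α B) !_t (A #_α C) in the Loewner order. -/
open Matrix
open scoped ComplexOrder

section aux
open scoped MatrixOrder Matrix.Norms.L2Operator

noncomputable local instance instAuxCStar {n : ℕ} : CStarAlgebra (Matrix (Fin n) (Fin n) ℂ) where

theorem aux_mpow_eq {n : ℕ} {A : Matrix (Fin n) (Fin n) ℂ} (hA : A.PosSemidef) (r : ℝ) :
    mpow A r = A ^ r := (CFC.rpow_eq_cfc_real hA.nonneg).symm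

theorem aux_posDef {n : ℕ} {A : Matrix (Fin n) (Fin n) ℂ} (hA : A.PosDef) (r : ℝ) :
    (mpow A r).PosDef := by
  rw [aux_mpow_eq hA.posSemidef]
  exact (IsStrictlyPositive.rpow (A := Matrix (Fin n) (Fin n) ℂ) A r hA.isStrictlyPositive).posDef

theorem aux_mul {n : ℕ} {A : Matrix (Fin n) (Fin n) ℂ} (hA : A.PosDef) (r : ℝ) :
    mpow A r * mpow A (-r) = 1 := by
  rw [aux_mpow_eq hA.posSemidef, aux_mpow_eq hA.posSemidef]
  exact CFC.rpow_mul_rpow_neg r hA.isStrictlyPositive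

theorem aux_neg {n : ℕ} {A : Matrix (Fin n) (Fin n) ℂ} (hA : A.PosDef) (r : ℝ) :
    mpow A (-r) = (mpow A r)⁻¹ :=
  (Matrix.inv_eq_right_inv (aux_mul hA r)).symm

theorem aux_inv {n : ℕ} {A : Matrix (Fin n) (Fin n) ℂ} (hA : A.PosDef) (r : ℝ) :
    mpow A⁻¹ r = (mpow A r)⁻¹ := by
  have h1 : A⁻¹ = A ^ (-1 : ℝ) := by
    have := aux_neg hA 1
    rw [aux_mpow_eq hA.posSemidef, aux_mpow_eq hA.posSemidef, CFC.rpow_one A hA.posSemidef.nonneg] at this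
    exact this.symm
  rw [← aux_neg hA, aux_mpow_eq hA.inv.posSemidef, aux_mpow_eq hA.posSemidef, h1,
    CFC.rpow_rpow A (-1) r (by norm_num) hA.isStrictlyPositive]
  simp

theorem aux_concave_s15 {n : ℕ} {P Q : Matrix (Fin n) (Fin n) ℂ} (hP : P.PosDef) (hQ : Q.PosDef)
    {α t : ℝ} (hα : α ∈ Set.Icc (0:ℝ) 1) (ht : t ∈ Set.Icc (0:ℝ) 1) :
    (1 - t) • mpow P α + t • mpow Q α ≤ mpow ((1 - t) • P + t • Q) α := by
  have hPQ : ((1 - t) • P + t • Q).PosSemidef :=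
    (hP.posSemidef.smul (sub_nonneg.2 ht.2)).add (hQ.posSemidef.smul ht.1)
  rw [aux_mpow_eq hP.posSemidef, aux_mpow_eq hQ.posSemidef, aux_mpow_eq hPQ]
  exact (CFC.concaveOn_rpow (A := Matrix (Fin n) (Fin n) ℂ) hα).2 hP.posSemidef.nonneg
    hQ.posSemidef.nonneg (sub_nonneg.2 ht.2) ht.1 (by ring)

theorem aux_comb {n : ℕ} {P Q : Matrix (Fin n) (Fin n) ℂ} (hP : P.PosDef) (hQ : Q.PosDef)
    {t : ℝ} (ht : t ∈ Set.Icc (0:ℝ) 1) : ((1 - t) • P + t • Q).PosDef := by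
  rcases ht.1.eq_or_lt with h | h
  · subst h; simpa using hP
  · exact PosDef.posSemidef_add (hP.posSemidef.smul (sub_nonneg.2 ht.2)) (hQ.smul h)

theorem aux_inv_anti_s15 {n : ℕ} {P Q : Matrix (Fin n) (Fin n) ℂ} (hP : P.PosDef) (hQ : Q.PosDef)
    (h : P ≤ Q) : Q⁻¹ ≤ P⁻¹ := by
  have := CStarAlgebra.ringInverse_le_ringInverse (A := Matrix (Fin n) (Fin n) ℂ) h hP.isStrictlyPositive
  simpa [Matrix.nonsing_inv_eq_ringInverse] using this

theorem aux_main_s15 {n : ℕ} {X Y : Matrix (Fin n) (Fin n) ℂ} (hX : X.PosDef) (hY : Y.PosDef)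
    {α t : ℝ} (hα : α ∈ Set.Icc (0:ℝ) 1) (ht : t ∈ Set.Icc (0:ℝ) 1) :
    mpow (wharm t X Y) α ≤ wharm t (mpow X α) (mpow Y α) := by
  have h := aux_concave_s15 hX.inv hY.inv hα ht
  rw [aux_inv hX, aux_inv hY] at h
  have hc := aux_comb hX.inv hY.inv ht
  unfold wharm
  rw [aux_inv hc]
  exact aux_inv_anti_s15 (aux_comb (aux_posDef hX α).inv (aux_posDef hY α).inv ht) (aux_posDef hc α) h

theorem aux_harm_congr {n : ℕ} {S X Y : Matrix (Fin n) (Fin n) ℂ} (hS : IsUnit S.det) (t : ℝ) :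
    wharm t (S * X * S) (S * Y * S) = S * wharm t X Y * S := by
  unfold wharm
  have : (1 - t) • (S * X * S)⁻¹ + t • (S * Y * S)⁻¹
      = S⁻¹ * ((1 - t) • X⁻¹ + t • Y⁻¹) * S⁻¹ := by
    simp only [Matrix.mul_inv_rev, mul_add, add_mul, mul_smul_comm, smul_mul_assoc, mul_assoc]
  rw [this, Matrix.mul_inv_rev, Matrix.mul_inv_rev, Matrix.nonsing_inv_nonsing_inv _ hS, mul_assoc]

theorem aux_final_s15 {n : ℕ} (A B C : Matrix (Fin n) (Fin n) ℂ)
    (hA : A.PosDef) (hB : B.PosDef) (hC : C.PosDef)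
    (α : ℝ) (hα : α ∈ Set.Icc (0:ℝ) 1) (t : ℝ) (ht : t ∈ Set.Icc (0:ℝ) 1) :
    wgeom α A (wharm t B C) ≤ wharm t (wgeom α A B) (wgeom α A C) := by
  have hS := aux_posDef hA (1/2)
  have hT := aux_posDef hA (-(1/2))
  have hconj : ∀ D : Matrix (Fin n) (Fin n) ℂ, D.PosDef →
      (mpow A (-(1/2)) * D * mpow A (-(1/2))).PosDef := by
    intro D hD
    have := hD.conjTranspose_mul_mul_same (B := mpow A (-(1/2)))
      (Matrix.mulVec_injective_iff_isUnit.2 hT.isUnit)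
    rwa [hT.isHermitian.eq] at this
  unfold wgeom
  rw [aux_harm_congr ((Matrix.isUnit_iff_isUnit_det _).1 hS.isUnit),
    ← aux_harm_congr ((Matrix.isUnit_iff_isUnit_det _).1 hT.isUnit)]
  exact IsSelfAdjoint.conjugate_le_conjugate (aux_main_s15 (hconj B hB) (hconj C hC) hα ht)
    hS.isHermitian

end aux

theorem stmt_15 (n : ℕ) (A B C : Matrix (Fin n) (Fin n) ℂ)
    (hA : A.PosDef) (hB : B.PosDef) (hC : C.PosDef)
    (α : ℝ) (hα : α ∈ Set.Icc (0:ℝ) 1) (t : ℝ) (ht : t ∈ Set.Icc (0:ℝ) 1) :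
    MLE (wgeom α A (wharm t B C)) (wharm t (wgeom α A B) (wgeom α A C)) := 
  aux_final_s15 A B C hA hB hC α hα t ht
end

section
/- For every n ∈ ℕ, all n×n positive definite complex matrices A, B, C, and all α, t ∈ [0,1], one has A #_α (B ∇_t C) ≥ (A #_α B) ∇_t (A #_α C) in the Loewner order. -/
open Matrix
open scoped ComplexOrder

section helpers
open scoped MatrixOrder Matrix.Norms.L2Operator

theorem mpow_eq_rpow {n : ℕ} (X : Matrix (Fin n) (Fin n) ℂ) (hX : X.PosSemidef) (r : ℝ) :
    mpow X r = X ^ r := by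
  rw [CFC.rpow_eq_cfc_real (ha := hX.nonneg)]
  rfl

theorem mpow_isHermitian {n : ℕ} (X : Matrix (Fin n) (Fin n) ℂ) (r : ℝ) :
    (mpow X r).IsHermitian :=
  cfc_predicate (p := IsSelfAdjoint) (fun x : ℝ => x ^ r) X

theorem mpow_concave {n : ℕ} (X Y : Matrix (Fin n) (Fin n) ℂ) (hX : X.PosSemidef)
    (hY : Y.PosSemidef) (α : ℝ) (hα : α ∈ Set.Icc (0:ℝ) 1) (t : ℝ) (ht : t ∈ Set.Icc (0:ℝ) 1) :
    (mpow ((1 - t) • X + t • Y) α - ((1 - t) • mpow X α + t • mpow Y α)).PosSemidef := by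
  have h := (CFC.concaveOn_rpow (A := Matrix (Fin n) (Fin n) ℂ) hα)
  have hX0 : X ∈ Set.Ici (0 : Matrix (Fin n) (Fin n) ℂ) := hX.nonneg
  have hY0 : Y ∈ Set.Ici (0 : Matrix (Fin n) (Fin n) ℂ) := hY.nonneg
  have h1t : 0 ≤ 1 - t := by linarith [ht.2]
  have hs : 1 - t + t = 1 := by ring
  have hc := h.1 hX0 hY0 h1t ht.1 hs
  have h2 := h.2 hX0 hY0 h1t ht.1 hs
  have hp : ((1 - t) • X + t • Y).PosSemidef := Matrix.nonneg_iff_posSemidef.mp hc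
  rw [mpow_eq_rpow X hX, mpow_eq_rpow Y hY, mpow_eq_rpow _ hp]
  exact Matrix.le_iff.mp h2

end helpers

theorem stmt_16 (n : ℕ) (A B C : Matrix (Fin n) (Fin n) ℂ)
    (hA : A.PosDef) (hB : B.PosDef) (hC : C.PosDef)
    (α : ℝ) (hα : α ∈ Set.Icc (0:ℝ) 1) (t : ℝ) (ht : t ∈ Set.Icc (0:ℝ) 1) :
    MLE (warith t (wgeom α A B) (wgeom α A C)) (wgeom α A (warith t B C)) := by
  have hS := mpow_isHermitian A (1/2)
  have hT := mpow_isHermitian A (-(1/2))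
  unfold MLE warith wgeom
  generalize mpow A (1/2) = S at *
  generalize mpow A (-(1/2)) = T at *
  have hX : (T * B * T).PosSemidef := by
    have := hB.posSemidef.mul_mul_conjTranspose_same T
    rwa [hT.eq] at this
  have hY : (T * C * T).PosSemidef := by
    have := hC.posSemidef.mul_mul_conjTranspose_same T
    rwa [hT.eq] at this
  have key := (mpow_concave _ _ hX hY α hα t ht).mul_mul_conjTranspose_same S
  rw [hS.eq] at key
  have e : T * ((1 - t) • B + t • C) * T = (1 - t) • (T * B * T) + t • (T * C * T) := by
    simp only [mul_add, add_mul, Matrix.mul_smul, Matrix.smul_mul]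
  rw [e]
  convert key using 1
  simp only [mul_add, add_mul, mul_sub, sub_mul, Matrix.mul_smul, Matrix.smul_mul]
end

section
/- For every n ∈ ℕ, all n×n positive definite complex matrices A, B, C, every p ∈ [-1,1] with p ≠ 0, and all α, t ∈ [0,1], one has A #_{p,α} (B !_t C) ≤ (A #_{p,α} B) !_t (A #_{p,α} C) in the Loewner order, where the quasi-arithmetic power mean is A #_{p,α} B = A^{1/2} ((1-α)I + α (A^{-1/2} B A^{-1/2})^p)^{1/p} A^{1/2}. -/
open Matrix
open scoped ComplexOrder

/-- The quasi-arithmetic power mean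
`A #_{p,α} B = A^{1/2} ((1-α)I + α (A^{-1/2} B A^{-1/2})^p)^{1/p} A^{1/2}`. -/
noncomputable def qmean {n : ℕ} (p α : ℝ) (A B : Matrix (Fin n) (Fin n) ℂ) :
    Matrix (Fin n) (Fin n) ℂ :=
  mpow A (1/2) *
    mpow ((1 - α) • (1 : Matrix (Fin n) (Fin n) ℂ) +
      α • mpow (mpow A (-(1/2)) * B * mpow A (-(1/2))) p) (1/p) *
    mpow A (1/2)


open MeasureTheory Set Filter Topology

/-- defect of concavity -/
noncomputable def Dfun {n : ℕ} (X Y : Matrix (Fin n) (Fin n) ℂ) (t : ℝ) (f : ℝ → ℝ) :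
    Matrix (Fin n) (Fin n) ℂ :=
  cfc f ((1 - t) • X + t • Y) - ((1 - t) • cfc f X + t • cfc f Y)

/-- positive and operator concave functions -/
def KK (f : ℝ → ℝ) : Prop :=
  (∀ x, 0 < x → 0 < f x) ∧
  ∀ (n : ℕ) (X Y : Matrix (Fin n) (Fin n) ℂ), X.PosDef → Y.PosDef →
    ∀ t ∈ Set.Icc (0:ℝ) 1, (Dfun X Y t f).PosSemidef

lemma comb_posDef {n : ℕ} {X Y : Matrix (Fin n) (Fin n) ℂ} (hX : X.PosDef) (hY : Y.PosDef)
    {t : ℝ} (ht : t ∈ Set.Icc (0:ℝ) 1) : ((1 - t) • X + t • Y).PosDef := by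
  rcases eq_or_lt_of_le ht.1 with h | h
  · subst h; simpa using hX
  · exact Matrix.PosDef.posSemidef_add (hX.posSemidef.smul (sub_nonneg.2 ht.2)) (hY.smul h)

lemma spec_pos {n : ℕ} {X : Matrix (Fin n) (Fin n) ℂ} (hX : X.PosDef) {x : ℝ}
    (hx : x ∈ spectrum ℝ X) : 0 < x := by
  rw [hX.1.spectrum_real_eq_range_eigenvalues] at hx
  obtain ⟨i, rfl⟩ := hx
  exact hX.eigenvalues_pos i

lemma spec_cont {n : ℕ} (X : Matrix (Fin n) (Fin n) ℂ) (f : ℝ → ℝ) :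
    ContinuousOn f (spectrum ℝ X) := by
  rw [continuousOn_iff_continuous_domRestrict]; fun_prop

lemma cfc_herm {n : ℕ} (X : Matrix (Fin n) (Fin n) ℂ) (f : ℝ → ℝ) :
    (cfc f X).IsHermitian := cfc_predicate f X

lemma quad {n : ℕ} {X : Matrix (Fin n) (Fin n) ℂ} (hX : X.IsHermitian) (v : Fin n → ℂ) :
    ∃ w : Fin n → ℝ, ∀ f : ℝ → ℝ,
      star v ⬝ᵥ (cfc f X *ᵥ v) = ((∑ i, w i * f (hX.eigenvalues i) : ℝ) : ℂ) := by
  refine ⟨fun i => Complex.normSq (((star (hX.eigenvectorUnitary : Matrix (Fin n) (Fin n) ℂ)) *ᵥ v) i),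
    fun f => ?_⟩
  rw [hX.cfc_eq, IsHermitian.cfc, Unitary.conjStarAlgAut_apply]
  rw [← Matrix.mulVec_mulVec, ← Matrix.mulVec_mulVec, Matrix.dotProduct_mulVec]
  have : star v ᵥ* (hX.eigenvectorUnitary : Matrix (Fin n) (Fin n) ℂ) =
      star ((star (hX.eigenvectorUnitary : Matrix (Fin n) (Fin n) ℂ)) *ᵥ v) := by
    rw [Matrix.star_mulVec, Matrix.star_eq_conjTranspose, Matrix.conjTranspose_conjTranspose]
  rw [this]
  simp only [dotProduct, Matrix.mulVec_diagonal]
  push_cast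
  refine Finset.sum_congr rfl fun i _ => ?_
  simp only [Pi.star_apply, Complex.normSq_eq_conj_mul_self, Function.comp]
  simp only [RCLike.star_def, Complex.coe_algebraMap, RCLike.ofReal_eq_complex_ofReal]
  ring

lemma Dfun_quad {n : ℕ} {X Y : Matrix (Fin n) (Fin n) ℂ} (hX : X.PosDef) (hY : Y.PosDef)
    {t : ℝ} (ht : t ∈ Set.Icc (0:ℝ) 1) (v : Fin n → ℂ) :
    ∃ (c l : Fin n ⊕ Fin n ⊕ Fin n → ℝ), (∀ i, 0 < l i) ∧ ∀ f : ℝ → ℝ,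
      star v ⬝ᵥ (Dfun X Y t f *ᵥ v) = ((∑ i, c i * f (l i) : ℝ) : ℂ) := by
  have hZ := comb_posDef hX hY ht
  obtain ⟨a, ha⟩ := quad hX.1 v
  obtain ⟨b, hb⟩ := quad hY.1 v
  obtain ⟨c, hc⟩ := quad hZ.1 v
  refine ⟨Sum.elim c (Sum.elim (fun i => -(1 - t) * a i) (fun i => -t * b i)),
    Sum.elim hZ.1.eigenvalues (Sum.elim hX.1.eigenvalues hY.1.eigenvalues), ?_, ?_⟩
  · rintro (i | i | i)
    · exact hZ.eigenvalues_pos i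
    · exact hX.eigenvalues_pos i
    · exact hY.eigenvalues_pos i
  · intro f
    rw [Dfun, Matrix.sub_mulVec, Matrix.add_mulVec, dotProduct_sub, dotProduct_add,
      Matrix.smul_mulVec, Matrix.smul_mulVec, dotProduct_smul, dotProduct_smul, ha, hb, hc]
    simp only [Fintype.sum_sum_type, Sum.elim_inl, Sum.elim_inr, Complex.real_smul,
      mul_assoc, ← Finset.mul_sum]
    push_cast
    ring

lemma Dfun_herm {n : ℕ} (X Y : Matrix (Fin n) (Fin n) ℂ) (t : ℝ) (f : ℝ → ℝ) :
    (Dfun X Y t f).IsHermitian := by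
  have h1 : ∀ (s : ℝ) (Z : Matrix (Fin n) (Fin n) ℂ), Z.IsHermitian → (s • Z).IsHermitian := by
    intro s Z hZ
    rw [IsHermitian, conjTranspose_smul, hZ]; simp
  exact (cfc_herm _ f).sub ((h1 _ _ (cfc_herm _ f)).add (h1 _ _ (cfc_herm _ f)))

lemma KK_of {f : ℝ → ℝ} (hf : ∀ x, 0 < x → 0 < f x)
    (h : ∀ (ι : Type) [Fintype ι] (c l : ι → ℝ), (∀ i, 0 < l i) →
      (∀ g, KK g → 0 ≤ ∑ i, c i * g (l i)) → 0 ≤ ∑ i, c i * f (l i)) : KK f := by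
  refine ⟨hf, fun n X Y hX hY t ht => ?_⟩
  refine Matrix.PosSemidef.of_dotProduct_mulVec_nonneg (Dfun_herm _ _ _ _) fun v => ?_
  obtain ⟨c, l, hl, hc⟩ := Dfun_quad hX hY ht v
  rw [hc]
  have := h _ c l hl fun g hg => by
    have := (hg.2 n X Y hX hY t ht).dotProduct_mulVec_nonneg v
    rw [hc] at this
    exact_mod_cast this
  exact_mod_cast this

lemma KK_congr {f g : ℝ → ℝ} (hf : KK f) (h : ∀ x, 0 < x → f x = g x) : KK g := by
  refine KK_of (fun x hx => h x hx ▸ hf.1 x hx) fun ι _ c l hl H => ?_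
  have := H f hf
  simpa only [fun i => h (l i) (hl i)] using this

lemma KK_comb {f g : ℝ → ℝ} (hf : KK f) (hg : KK g) {a b : ℝ} (ha : 0 ≤ a) (hb : 0 ≤ b)
    (hab : 0 < a + b) : KK (fun x => a * f x + b * g x) := by
  refine KK_of (fun x hx => ?_) fun ι _ c l hl H => ?_
  · have h1 := hf.1 x hx
    have h2 := hg.1 x hx
    rcases eq_or_lt_of_le ha with h | h
    · subst h
      have : 0 < b := by linarith
      have := mul_pos this h2
      linarith
    · have := mul_pos h h1
      have := mul_nonneg hb h2.le
      linarith
  · have h1 := mul_nonneg ha (H f hf)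
    have h2 := mul_nonneg hb (H g hg)
    have : ∑ i, c i * (a * f (l i) + b * g (l i)) =
      a * ∑ i, c i * f (l i) + b * ∑ i, c i * g (l i) := by
      rw [Finset.mul_sum, Finset.mul_sum, ← Finset.sum_add_distrib]
      exact Finset.sum_congr rfl fun i _ => by ring
    linarith

lemma KK_smul {f : ℝ → ℝ} (hf : KK f) {a : ℝ} (ha : 0 < a) : KK (fun x => a * f x) :=
  KK_congr (KK_comb hf hf ha.le le_rfl (by linarith)) (fun x _ => by ring)

lemma KK_lim {F : ℕ → ℝ → ℝ} {f : ℝ → ℝ} (hF : ∀ k, KK (F k)) (hf : ∀ x, 0 < x → 0 < f x)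
    (h : ∀ x, 0 < x → Tendsto (fun k => F k x) atTop (𝓝 (f x))) : KK f := by
  refine KK_of hf fun ι _ c l hl H => ?_
  have : Tendsto (fun k => ∑ i, c i * F k (l i)) atTop (𝓝 (∑ i, c i * f (l i))) :=
    tendsto_finsetSum _ fun i _ => (h _ (hl i)).const_mul _
  exact ge_of_tendsto' this fun k => H _ (hF k)

lemma KK_int {F : ℝ → ℝ → ℝ} {f : ℝ → ℝ} (hF : ∀ s, 0 < s → KK (F s)) (hf : ∀ x, 0 < x → 0 < f x)
    (hi : ∀ x, 0 < x → IntegrableOn (fun s => F s x) (Ioi 0))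
    (h : ∀ x, 0 < x → f x = ∫ s in Ioi 0, F s x) : KK f := by
  refine KK_of hf fun ι _ c l hl H => ?_
  have : ∑ i, c i * f (l i) = ∫ s in Ioi 0, ∑ i, c i * F s (l i) := by
    rw [integral_finsetSum _ fun i _ => (hi _ (hl i)).const_mul _]
    refine Finset.sum_congr rfl fun i _ => ?_
    rw [integral_const_mul, h _ (hl i)]
  rw [this]
  exact setIntegral_nonneg measurableSet_Ioi fun s hs => H _ (hF s hs)

lemma KK_one : KK (fun _ => 1) := by
  refine ⟨fun _ _ => one_pos, fun n X Y hX hY t ht => ?_⟩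
  have hZ := comb_posDef hX hY ht
  rw [Dfun, cfc_const_one ℝ X hX.1.isSelfAdjoint, cfc_const_one ℝ Y hY.1.isSelfAdjoint,
    cfc_const_one ℝ _ hZ.1.isSelfAdjoint, ← add_smul]
  simpa using Matrix.PosSemidef.zero

lemma KK_id : KK (fun x => x) := by
  refine ⟨fun _ h => h, fun n X Y hX hY t ht => ?_⟩
  have hZ := comb_posDef hX hY ht
  rw [Dfun, cfc_id' ℝ X hX.1.isSelfAdjoint, cfc_id' ℝ Y hY.1.isSelfAdjoint,
    cfc_id' ℝ _ hZ.1.isSelfAdjoint]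
  simpa using Matrix.PosSemidef.zero

lemma par_key {n : ℕ} {X : Matrix (Fin n) (Fin n) ℂ} (hX : X.PosDef) {f g : ℝ → ℝ}
    (hf : ∀ x, 0 < x → 0 < f x) (hg : ∀ x, 0 < x → 0 < g x) (M : Matrix (Fin n) (Fin n) ℂ) :
    Mᴴ * cfc f X * M + (1 - M)ᴴ * cfc g X * (1 - M) - cfc (fun x => f x * g x / (f x + g x)) X
     = (M - cfc (fun x => g x / (f x + g x)) X)ᴴ * (cfc f X + cfc g X)
        * (M - cfc (fun x => g x / (f x + g x)) X) := by
  set N := cfc (fun x => g x / (f x + g x)) X with hN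
  have hNh : Nᴴ = N := cfc_herm _ _
  have e1 : N * (cfc f X + cfc g X) = cfc g X := by
    rw [hN, ← cfc_add (a := X) f g (spec_cont _ _) (spec_cont _ _),
      ← cfc_mul _ _ X (spec_cont _ _) (spec_cont _ _)]
    refine cfc_congr fun x hx => ?_
    have := hf x (spec_pos hX hx)
    have := hg x (spec_pos hX hx)
    field_simp
  have e2 : (cfc f X + cfc g X) * N = cfc g X := by
    rw [hN, ← cfc_add (a := X) f g (spec_cont _ _) (spec_cont _ _),
      ← cfc_mul _ _ X (spec_cont _ _) (spec_cont _ _)]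
    refine cfc_congr fun x hx => ?_
    have := hf x (spec_pos hX hx)
    have := hg x (spec_pos hX hx)
    field_simp
  have e3 : cfc (fun x => f x * g x / (f x + g x)) X = cfc g X - cfc g X * N := by
    rw [hN, ← cfc_mul _ _ X (spec_cont _ _) (spec_cont _ _),
      ← cfc_sub (a := X) _ _ (spec_cont _ _) (spec_cont _ _)]
    refine cfc_congr fun x hx => ?_
    have := hf x (spec_pos hX hx)
    have := hg x (spec_pos hX hx)
    field_simp
    ring
  rw [e3, conjTranspose_sub, conjTranspose_sub, hNh, conjTranspose_one, sub_mul Mᴴ N, e1]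
  have : ∀ K : Matrix (Fin n) (Fin n) ℂ, K * (cfc f X + cfc g X) * (M - N) =
      K * (cfc f X + cfc g X) * M - K * cfc g X := by
    intro K; rw [mul_sub, mul_assoc K _ N, e2]
  rw [sub_mul (Mᴴ * (cfc f X + cfc g X)), this]
  noncomm_ring

lemma cfc_psd {n : ℕ} {X : Matrix (Fin n) (Fin n) ℂ} (hX : X.PosDef) {f : ℝ → ℝ}
    (hf : ∀ x, 0 < x → 0 < f x) : (cfc f X).PosDef := by
  refine (IsHermitian.posDef_iff_eigenvalues_pos (cfc_herm X f)).2 fun i => ?_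
  have := (cfc_herm X f).eigenvalues_mem_spectrum_real i
  rw [cfc_map_spectrum (R := ℝ) f X hX.1.isSelfAdjoint (spec_cont _ _)] at this
  obtain ⟨x, hx, hxe⟩ := this
  rw [← hxe]
  exact hf x (spec_pos hX hx)

lemma par_le {n : ℕ} {X : Matrix (Fin n) (Fin n) ℂ} (hX : X.PosDef) {f g : ℝ → ℝ}
    (hf : ∀ x, 0 < x → 0 < f x) (hg : ∀ x, 0 < x → 0 < g x) (M : Matrix (Fin n) (Fin n) ℂ) :
    (Mᴴ * cfc f X * M + (1 - M)ᴴ * cfc g X * (1 - M)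
      - cfc (fun x => f x * g x / (f x + g x)) X).PosSemidef := by
  rw [par_key hX hf hg]
  exact ((cfc_psd hX hf).add (cfc_psd hX hg)).posSemidef.conjTranspose_mul_mul_same _

lemma KK_par {f g : ℝ → ℝ} (hf : KK f) (hg : KK g) :
    KK (fun x => f x * g x / (f x + g x)) := by
  refine ⟨fun x hx => ?_, fun n X Y hX hY t ht => ?_⟩
  · have := hf.1 x hx
    have := hg.1 x hx
    positivity
  have hZ := comb_posDef hX hY ht
  have hk := par_key hZ hf.1 hg.1 (cfc (fun x => g x / (f x + g x)) ((1 - t) • X + t • Y))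
  rw [sub_self, mul_zero, sub_eq_zero] at hk
  rw [Dfun, ← hk]
  generalize cfc (fun x => g x / (f x + g x)) ((1 - t) • X + t • Y) = M
  have h1 := (par_le hX hf.1 hg.1 M).smul (sub_nonneg.2 ht.2)
  have h2 := (par_le hY hf.1 hg.1 M).smul ht.1
  have h3 := (hf.2 n X Y hX hY t ht).conjTranspose_mul_mul_same M
  have h4 := (hg.2 n X Y hX hY t ht).conjTranspose_mul_mul_same (1 - M)
  convert ((h1.add h2).add h3).add h4 using 1
  simp only [Dfun, mul_sub, sub_mul, mul_add, add_mul, smul_sub, smul_add, mul_smul_comm,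
    smul_mul_assoc]
  abel

lemma KK_geo {f g : ℝ → ℝ} (hf : KK f) (hg : KK g) {q : ℝ} (hq0 : 0 < q) (hq1 : q ≤ 1) :
    KK (fun x => f x ^ (1 - q) * g x ^ q) := by
  rcases eq_or_lt_of_le hq1 with rfl | hq1
  · exact KK_congr hg fun x _ => by simp
  have hq : q ∈ Ioo (0:ℝ) 1 := ⟨hq0, hq1⟩
  set C := ∫ t in Ioi 0, Real.rpowIntegrand₀₁ q t 1 with hC
  refine KK_int (F := fun s x => C⁻¹ * (f x * Real.rpowIntegrand₀₁ q s (g x / f x))) ?_ ?_ ?_ ?_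
  · intro s hs
    have hCp : 0 < C := Real.integral_rpowIntegrand₀₁_one_pos hq
    have := KK_smul (KK_smul (KK_par hf (KK_smul hg (inv_pos.2 hs)))
      (Real.rpow_pos_of_pos hs (q - 1))) (inv_pos.2 hCp)
    refine KK_congr this fun x hx => ?_
    have h1 := hf.1 x hx
    have h2 := hg.1 x hx
    rw [Real.rpowIntegrand₀₁_eq_pow_div hq hs.le (by positivity)]
    field_simp
  · intro x hx
    have h1 := hf.1 x hx
    have h2 := hg.1 x hx
    positivity
  · intro x hx
    have h1 := hf.1 x hx
    have h2 := hg.1 x hx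
    exact ((Real.integrableOn_rpowIntegrand₀₁_Ioi hq (by positivity)).const_mul _).const_mul _
  · intro x hx
    have h1 := hf.1 x hx
    have h2 := hg.1 x hx
    rw [integral_const_mul, integral_const_mul, mul_left_comm,
      ← Real.rpow_eq_const_mul_integral hq (by positivity), Real.div_rpow h2.le h1.le,
      Real.rpow_sub h1, Real.rpow_one]
    field_simp

/-- iterated exponents -/
noncomputable def ee (q : ℝ) : ℕ → ℝ
  | 0 => 0
  | k + 1 => 1 + (1 - q) * ee q k

lemma ee_eq {q : ℝ} (hq : q ≠ 0) (k : ℕ) : ee q k = (1 - (1 - q) ^ k) / q := by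
  induction k with
  | zero => simp [ee]
  | succ k ih => rw [ee, ih]; field_simp; ring

lemma ee_lim {q : ℝ} (hq0 : 0 < q) (hq1 : q ≤ 1) : Tendsto (ee q) atTop (𝓝 (1 / q)) := by
  have h : Tendsto (fun k : ℕ => (1 - (1 - q) ^ k) / q) atTop (𝓝 ((1 - 0) / q)) :=
    ((tendsto_pow_atTop_nhds_zero_of_lt_one (by linarith) (by linarith)).const_sub 1).div_const q
  rw [sub_zero] at h
  exact h.congr fun k => (ee_eq hq0.ne' k).symm

lemma cpos {α : ℝ} (hα : α ∈ Icc (0:ℝ) 1) {x : ℝ} (hx : 0 < x) : 0 < 1 - α + α * x := by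
  rcases eq_or_lt_of_le hα.1 with h | h
  · rw [← h]; simp
  · have := mul_pos h hx
    have := hα.2
    linarith

lemma KK_pos {q : ℝ} (hq0 : 0 < q) (hq1 : q ≤ 1) {α : ℝ} (hα : α ∈ Icc (0:ℝ) 1) :
    KK (fun x => (1 - α + α * x ^ q) ^ (1 / q)) := by
  have hc : ∀ x : ℝ, 0 < x → 0 < 1 - α + α * x ^ q := fun x hx =>
    cpos hα (Real.rpow_pos_of_pos hx q)
  refine KK_lim (F := fun k x => (1 - α + α * x ^ q) ^ ee q k) ?_ ?_ ?_
  · intro k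
    induction k with
    | zero => exact KK_congr KK_one fun x _ => by simp [ee]
    | succ k ih =>
      refine KK_congr (KK_comb (KK_geo ih KK_one hq0 hq1) (KK_geo ih KK_id hq0 hq1)
        (sub_nonneg.2 hα.2) hα.1 (by linarith)) fun x hx => ?_
      have := hc x hx
      simp only [ee]
      rw [Real.rpow_add this, Real.rpow_one, ← Real.rpow_mul this.le, mul_comm (ee q k)]
      simp only [Real.one_rpow]
      ring
  · intro x hx
    exact Real.rpow_pos_of_pos (hc x hx) _
  · intro x hx
    exact (Real.continuous_const_rpow (hc x hx).ne').continuousAt.tendsto.comp (ee_lim hq0 hq1)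

lemma KK_harm {f g : ℝ → ℝ} (hf : KK f) (hg : KK g) {α : ℝ} (hα : α ∈ Icc (0:ℝ) 1) :
    KK (fun x => ((1 - α) * (f x)⁻¹ + α * (g x)⁻¹)⁻¹) := by
  rcases eq_or_lt_of_le hα.1 with h | h
  · subst h; exact KK_congr hf fun x _ => by simp
  rcases eq_or_lt_of_le hα.2 with h' | h'
  · subst h'; exact KK_congr hg fun x _ => by simp
  have h' : 0 < 1 - α := sub_pos.2 h'
  refine KK_congr (KK_par (KK_smul hf (inv_pos.2 h')) (KK_smul hg (inv_pos.2 h))) fun x hx => ?_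
  have h1 := hf.1 x hx
  have h2 := hg.1 x hx
  field_simp
  ring

lemma KK_neg {q : ℝ} (hq0 : 0 < q) (hq1 : q ≤ 1) {α : ℝ} (hα : α ∈ Icc (0:ℝ) 1) :
    KK (fun x => (1 - α + α * x ^ (-q)) ^ (1 / (-q))) := by
  have hc : ∀ x : ℝ, 0 < x → 0 < 1 - α + α * x ^ (-q) := fun x hx =>
    cpos hα (Real.rpow_pos_of_pos hx _)
  refine KK_lim (F := fun k x => (1 - α + α * x ^ (-q)) ^ (-ee q k)) ?_ ?_ ?_
  · intro k
    induction k with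
    | zero => exact KK_congr KK_one fun x _ => by simp [ee]
    | succ k ih =>
      refine KK_congr (KK_harm (KK_geo ih KK_one hq0 hq1) (KK_geo ih KK_id hq0 hq1) hα)
        fun x hx => ?_
      have := hc x hx
      simp only [ee]
      rw [Real.rpow_neg this.le (1 + _), Real.rpow_add this, Real.rpow_one, ← Real.rpow_mul this.le,
        show -ee q k * (1 - q) = -((1 - q) * ee q k) by ring, Real.rpow_neg this.le]
      simp only [Real.one_rpow, mul_inv, inv_inv, inv_one, ← Real.rpow_neg hx.le]
      rw [← mul_inv]
      congr 1
      ring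
  · intro x hx
    exact Real.rpow_pos_of_pos (hc x hx) _
  · intro x hx
    have := (ee_lim hq0 hq1).neg
    rw [show 1 / (-q) = -(1/q) by ring]
    exact (Real.continuous_const_rpow (hc x hx).ne').continuousAt.tendsto.comp this

lemma KK_all {p : ℝ} (hp : p ∈ Icc (-1:ℝ) 1) (hp0 : p ≠ 0) {α : ℝ} (hα : α ∈ Icc (0:ℝ) 1) :
    KK (fun x => (1 - α + α * x ^ p) ^ (1 / p)) := by
  rcases lt_or_gt_of_ne hp0 with h | h
  · have := KK_neg (q := -p) (by linarith) (by linarith [hp.1]) hα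
    simpa only [neg_neg] using this
  · exact KK_pos h hp.2 hα

lemma inv_anti {n : ℕ} {A B : Matrix (Fin n) (Fin n) ℂ} (hA : A.PosDef) (hB : B.PosDef)
    (h : (B - A).PosSemidef) : (A⁻¹ - B⁻¹).PosSemidef := by
  have hAu := (Matrix.isUnit_iff_isUnit_det _).1 hA.isUnit
  have hBu := (Matrix.isUnit_iff_isUnit_det _).1 hB.isUnit
  have h1 := hA.posSemidef.conjTranspose_mul_mul_same (A⁻¹ - B⁻¹)
  have h2 := h.conjTranspose_mul_mul_same B⁻¹
  have hAi : (A⁻¹)ᴴ = A⁻¹ := hA.inv.1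
  have hBi : (B⁻¹)ᴴ = B⁻¹ := hB.inv.1
  convert h1.add h2 using 1
  rw [conjTranspose_sub, hAi, hBi]
  simp only [sub_mul, mul_sub, Matrix.nonsing_inv_mul A hAu, Matrix.nonsing_inv_mul B hBu,
    mul_assoc, Matrix.mul_nonsing_inv A hAu, Matrix.mul_nonsing_inv B hBu, mul_one, one_mul]
  abel

lemma cfc_inv_mat {n : ℕ} {X : Matrix (Fin n) (Fin n) ℂ} (hX : X.PosDef) {f : ℝ → ℝ}
    (hf : ∀ x, 0 < x → 0 < f x) : (cfc f X)⁻¹ = cfc (fun x => (f x)⁻¹) X := by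
  refine Matrix.inv_eq_right_inv ?_
  rw [← cfc_mul _ _ X (spec_cont _ _) (spec_cont _ _), ← cfc_const_one ℝ X hX.1.isSelfAdjoint]
  refine cfc_congr fun x hx => ?_
  exact mul_inv_cancel₀ (hf x (spec_pos hX hx)).ne'

lemma cfc_comp_minv {n : ℕ} {X : Matrix (Fin n) (Fin n) ℂ} (hX : X.PosDef) (f : ℝ → ℝ) :
    cfc f X⁻¹ = cfc (fun x => f x⁻¹) X := by
  have h := cfc_inv_mat hX (f := fun x => x) (fun x h => h)
  rw [cfc_id' ℝ X hX.1.isSelfAdjoint] at h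
  rw [h, ← cfc_comp' f (fun x : ℝ => x⁻¹) X ((Set.Finite.image _ (Matrix.finite_real_spectrum)).continuousOn _)
    (spec_cont _ _) hX.1.isSelfAdjoint]

lemma wharm_conj {n : ℕ} {S X Y : Matrix (Fin n) (Fin n) ℂ} (hS : IsUnit S) (t : ℝ) :
    wharm t (S * X * S) (S * Y * S) = S * wharm t X Y * S := by
  have hd := (Matrix.isUnit_iff_isUnit_det _).1 hS
  unfold wharm
  rw [Matrix.mul_inv_rev, Matrix.mul_inv_rev, Matrix.mul_inv_rev, Matrix.mul_inv_rev]
  have : (1 - t) • (S⁻¹ * (X⁻¹ * S⁻¹)) + t • (S⁻¹ * (Y⁻¹ * S⁻¹)) =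
    S⁻¹ * ((1 - t) • X⁻¹ + t • Y⁻¹) * S⁻¹ := by
    simp only [mul_add, add_mul, mul_smul_comm, smul_mul_assoc, mul_assoc]
  rw [this, Matrix.mul_inv_rev, Matrix.mul_inv_rev, Matrix.nonsing_inv_nonsing_inv S hd, mul_assoc]

lemma cfc_wharm {n : ℕ} {X Y : Matrix (Fin n) (Fin n) ℂ} (hX : X.PosDef) (hY : Y.PosDef)
    {f : ℝ → ℝ} (hf : ∀ x, 0 < x → 0 < f x) (hg : KK (fun x => (f x⁻¹)⁻¹))
    {t : ℝ} (ht : t ∈ Icc (0:ℝ) 1) :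
    (wharm t (cfc f X) (cfc f Y) - cfc f (wharm t X Y)).PosSemidef := by
  have hW := comb_posDef hX.inv hY.inv ht
  have hD := hg.2 n _ _ hX.inv hY.inv t ht
  have e : ∀ Z : Matrix (Fin n) (Fin n) ℂ, Z.PosDef →
      cfc (fun x => (f x⁻¹)⁻¹) Z = (cfc f Z⁻¹)⁻¹ := by
    intro Z hZ
    rw [cfc_inv_mat hZ.inv hf, cfc_comp_minv hZ]
  have e' : ∀ Z : Matrix (Fin n) (Fin n) ℂ, Z.PosDef → Z⁻¹⁻¹ = Z := fun Z hZ =>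
    Matrix.nonsing_inv_nonsing_inv Z ((Matrix.isUnit_iff_isUnit_det _).1 hZ.isUnit)
  rw [Dfun, e _ hX.inv, e _ hY.inv, e _ hW, e' _ hX, e' _ hY] at hD
  have := inv_anti (comb_posDef (cfc_psd hX hf).inv (cfc_psd hY hf).inv ht)
    (cfc_psd hW.inv hf).inv hD
  rwa [e' _ (cfc_psd hW.inv hf)] at this

lemma qmean_eq {n : ℕ} (A B : Matrix (Fin n) (Fin n) ℂ) (p α : ℝ)
    (hX : (mpow A (-(1/2)) * B * mpow A (-(1/2))).PosDef) :
    qmean p α A B = mpow A (1/2) *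
      cfc (fun x : ℝ => (1 - α + α * x ^ p) ^ (1 / p)) (mpow A (-(1/2)) * B * mpow A (-(1/2)))
      * mpow A (1/2) := by
  unfold qmean
  congr 2
  generalize mpow A (-(1/2)) * B * mpow A (-(1/2)) = X at hX
  have h1 : (1 - α) • (1 : Matrix (Fin n) (Fin n) ℂ) + α • mpow X p =
      cfc (fun x : ℝ => 1 - α + α * x ^ p) X := by
    rw [cfc_const_add _ _ X (spec_cont _ _) hX.1.isSelfAdjoint,
      cfc_const_mul _ _ X (spec_cont _ _), Algebra.algebraMap_eq_smul_one, mpow]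
  rw [h1, mpow, ← cfc_comp' (fun x : ℝ => x ^ (1/p)) (fun x : ℝ => 1 - α + α * x ^ p) X
    ((Set.Finite.image _ (Matrix.finite_real_spectrum)).continuousOn _)
    (spec_cont _ _) hX.1.isSelfAdjoint]

theorem stmt_17 (n : ℕ) (A B C : Matrix (Fin n) (Fin n) ℂ)
    (hA : A.PosDef) (hB : B.PosDef) (hC : C.PosDef)
    (p : ℝ) (hp : p ∈ Set.Icc (-1:ℝ) 1) (hp0 : p ≠ 0)
    (α : ℝ) (hα : α ∈ Set.Icc (0:ℝ) 1) (t : ℝ) (ht : t ∈ Set.Icc (0:ℝ) 1) :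
    MLE (qmean p α A (wharm t B C)) (wharm t (qmean p α A B) (qmean p α A C)) := by
  have hS : (mpow A (1/2)).PosDef := cfc_psd hA fun x hx => Real.rpow_pos_of_pos hx _
  have hT : (mpow A (-(1/2))).PosDef := cfc_psd hA fun x hx => Real.rpow_pos_of_pos hx _
  have hTX : ∀ B : Matrix (Fin n) (Fin n) ℂ, B.PosDef →
      (mpow A (-(1/2)) * B * mpow A (-(1/2))).PosDef := by
    intro B hB
    have := hB.conjTranspose_mul_mul_same (B := mpow A (-(1/2)))
      (Matrix.mulVec_injective_of_isUnit hT.isUnit)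
    rwa [hT.1] at this
  have hW : (wharm t B C).PosDef := (comb_posDef hB.inv hC.inv ht).inv
  rw [MLE, qmean_eq _ _ _ _ (hTX _ hW), qmean_eq _ _ _ _ (hTX _ hB), qmean_eq _ _ _ _ (hTX _ hC),
    wharm_conj hS.isUnit, ← wharm_conj hT.isUnit]
  have hc : ∀ x : ℝ, 0 < x → 0 < 1 - α + α * x ^ p := fun x hx =>
    cpos hα (Real.rpow_pos_of_pos hx _)
  have key := cfc_wharm (hTX B hB) (hTX C hC) (f := fun x : ℝ => (1 - α + α * x ^ p) ^ (1 / p))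
    (fun x hx => Real.rpow_pos_of_pos (hc x hx) _) (t := t) ?_ ht
  · have := key.conjTranspose_mul_mul_same (mpow A (1/2))
    rw [hS.1] at this
    simpa only [mul_sub, sub_mul] using this
  · refine KK_congr (KK_all (p := -p) ⟨by linarith [hp.2], by linarith [hp.1]⟩
      (neg_ne_zero.2 hp0) hα) fun x hx => ?_
    have h1 := hc x⁻¹ (inv_pos.2 hx)
    rw [← Real.rpow_neg h1.le, Real.inv_rpow hx.le, Real.rpow_neg hx.le]
    congr 1
    ring
end

section
/- For every n ∈ ℕ, all n×n positive definite complex matrices A, B, and every r ∈ [-1,0], one has (A ! B)^r ≥ (A^r + B^r)/2 in the Loewner order. -/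
open Matrix
open scoped ComplexOrder

section Helpers
open scoped MatrixOrder Matrix.Norms.L2Operator

theorem mpow_inv_eq {n : ℕ} (X : Matrix (Fin n) (Fin n) ℂ) (hX : X.PosDef) (r : ℝ) :
    mpow X⁻¹ r = X ^ (-r) := by
  obtain ⟨u, hu⟩ := hX.isUnit
  have h0 : (0 : Matrix (Fin n) (Fin n) ℂ) ≤ (u : Matrix (Fin n) (Fin n) ℂ) := by
    rw [hu]; exact hX.posSemidef.nonneg
  have h1 : X⁻¹ = ((u⁻¹ : (Matrix (Fin n) (Fin n) ℂ)ˣ) : Matrix (Fin n) (Fin n) ℂ) := by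
    rw [← hu, Matrix.coe_units_inv]
  have h2 : (0 : Matrix (Fin n) (Fin n) ℂ) ≤ X⁻¹ := hX.inv.posSemidef.nonneg
  rw [← hu, CFC.rpow_neg u r h0, ← h1, CFC.rpow_eq_cfc_real h2, hu]
  rfl

theorem mpow_harm_aux {n : ℕ} (A B : Matrix (Fin n) (Fin n) ℂ)
    (hA : A.PosDef) (hB : B.PosDef) (r : ℝ) (hr : r ∈ Set.Icc (-1:ℝ) 0) :
    MLE ((2⁻¹ : ℝ) • (mpow A r + mpow B r)) (mpow (wharm 2⁻¹ A B) r) := by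
  have hA' := hA.inv
  have hB' := hB.inv
  have hS : ((1 - (2⁻¹ : ℝ)) • A⁻¹ + (2⁻¹ : ℝ) • B⁻¹).PosDef :=
    (hA'.smul (by norm_num)).add (hB'.smul (by norm_num))
  have eA := mpow_inv_eq A⁻¹ hA' r
  have eB := mpow_inv_eq B⁻¹ hB' r
  rw [Matrix.nonsing_inv_nonsing_inv _ ((Matrix.isUnit_iff_isUnit_det _).1 hA.isUnit)] at eA
  rw [Matrix.nonsing_inv_nonsing_inv _ ((Matrix.isUnit_iff_isUnit_det _).1 hB.isUnit)] at eB
  have hc := (CFC.concaveOn_rpow (A := Matrix (Fin n) (Fin n) ℂ) (p := -r)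
    ⟨by linarith [hr.2], by linarith [hr.1]⟩).2
    (Set.mem_Ici.2 hA'.posSemidef.nonneg) (Set.mem_Ici.2 hB'.posSemidef.nonneg)
    (show (0 : ℝ) ≤ 1 - 2⁻¹ by norm_num) (show (0 : ℝ) ≤ 2⁻¹ by norm_num) (by norm_num)
  unfold MLE wharm
  rw [mpow_inv_eq _ hS, eA, eB, ← Matrix.le_iff, smul_add]
  have h : (1 - 2⁻¹ : ℝ) = 2⁻¹ := by norm_num
  rw [h] at hc ⊢
  exact hc

end Helpers

theorem stmt_19 (n : ℕ) (A B : Matrix (Fin n) (Fin n) ℂ)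
    (hA : A.PosDef) (hB : B.PosDef) (r : ℝ) (hr : r ∈ Set.Icc (-1:ℝ) 0) :
    MLE ((2⁻¹ : ℝ) • (mpow A r + mpow B r)) (mpow (wharm 2⁻¹ A B) r) :=
  mpow_harm_aux A B hA hB r hr
end
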